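/- arXiv:2002.11796 — 2 statements merged into one kernel-verified Lean document; each statement's English description precedes it below -/
import Mathlib

section
/- For partitions λ and μ with μ ⊆ λ and conjugates λ', μ', the generalized skew Schur function satisfies the dual Jacobi–Trudi type identity s_{λ/μ}(X) = det( e_{λ'_i − μ'_j − i + j}(τ^{−μ'_j + j − 1} X) )_{1 ≤ i,j ≤ l'}, where l' = λ_1, e_r(τ^m X) = s_{(1^r)}(τ^m X) for r ≥ 1, e_0(τ^m X) = 1, and e_r(τ^m X) = 0 for r < 0. -/
open Finset
open scoped Classical


/-- Boxes of the skew Young diagram of `lam/mu` (0-indexed rows and columns):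
box `(i,j)` with `i < l` and `mu i ≤ j < lam i`. -/
def skewCells (lam mu : ℕ → ℕ) (l : ℕ) : Finset (ℕ × ℕ) :=
  (Finset.range l ×ˢ Finset.range (lam 0)).filter fun p => mu p.1 ≤ p.2 ∧ p.2 < lam p.1

/-- Content of a box `(i,j)` is `j - i`. -/
def content (p : ℕ × ℕ) : ℤ := (p.2 : ℤ) - (p.1 : ℤ)

/-- The ninth variation (generalized) skew Schur function: the sum over semistandard
fillings of the cell set `C` with entries in `Fin n` of the product of the
content-dependent weights `X entry content`. -/
noncomputable def schurGen {R : Type*} [CommRing R] (n : ℕ) (C : Finset (ℕ × ℕ))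
    (X : Fin n → ℤ → R) : R :=
  ∑ T ∈ Finset.univ.filter (fun T : {p // p ∈ C} → Fin n =>
      (∀ p q : {p // p ∈ C}, (q : ℕ × ℕ).1 = (p : ℕ × ℕ).1 ∧
          (q : ℕ × ℕ).2 = (p : ℕ × ℕ).2 + 1 → T p ≤ T q) ∧
      (∀ p q : {p // p ∈ C}, (q : ℕ × ℕ).1 = (p : ℕ × ℕ).1 + 1 ∧
          (q : ℕ × ℕ).2 = (p : ℕ × ℕ).2 → T p < T q)),
    ∏ p : {p // p ∈ C}, X (T p) (content (p : ℕ × ℕ))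

/-- Cells of a single row of `r` boxes, with contents `0, 1, …, r-1`. -/
def rowCells (r : ℕ) : Finset (ℕ × ℕ) := (Finset.range r).image fun j => (0, j)

/-- Cells of a single column of `r` boxes, with contents `0, -1, …, -(r-1)`. -/
def colCells (r : ℕ) : Finset (ℕ × ℕ) := (Finset.range r).image fun i => (i, 0)

/-- `h_r(τ^m X)`: the generalized complete homogeneous function, a one-row
generalized Schur function with leftmost content `m`; it is `1` for `r = 0`
and `0` for `r < 0`. -/
noncomputable def hGen {R : Type*} [CommRing R] (n : ℕ) (r m : ℤ) (X : Fin n → ℤ → R) : R :=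
  if r < 0 then 0 else schurGen n (rowCells r.toNat) fun k c => X k (m + c)

/-- `e_r(τ^m X)`: the generalized elementary function, a one-column generalized
Schur function with topmost content `m`; it is `1` for `r = 0` and `0` for `r < 0`. -/
noncomputable def eGen {R : Type*} [CommRing R] (n : ℕ) (r m : ℤ) (X : Fin n → ℤ → R) : R :=
  if r < 0 then 0 else schurGen n (colCells r.toNat) fun k c => X k (m + c)

/-- The conjugate partition: `(conj lam l) j` is the length of column `j`
(0-indexed) of the Young diagram of `lam`, whose rows are indexed below `l`. -/
def conjPart (lam : ℕ → ℕ) (l : ℕ) : ℕ → ℕ :=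
  fun j => ((Finset.range l).filter fun i => j < lam i).card

/-!
Measure each column by contents. Column `j` of the skew shape consists of the cells whose content
lies in a half-open interval `(c j, m j]`, and `c`, `m` are strictly increasing because the two
boundary partitions are weakly decreasing. In this notation the `(i, j)` entry of the determinant is
the elementary function of a column with contents in `(c i, m j]`.

Both sides satisfy the same recursion in the number `n` of variables. Removing the cells that carry
the largest entry raises `c` by one on a set `S` of columns, and for a fixed shape the admissible
`S` are those for which the raised `c` is still strictly increasing and at most `m`. On the other
side, the recursion for elementary functions splits row `i` of the matrix into the row for `c i`
and a multiple of the row for `c i + 1`, so multilinearity expands the determinant over all `S`.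
When the raised `c` is not strictly increasing, two of its values agree and two rows are equal.
-/

section Determinants

variable {R ι : Type*} [CommRing R] [Fintype ι]

theorem det_of_add_mul [DecidableEq ι] (a b : ι → ι → R) (x : ι → R) :
    (Matrix.of fun i j => a i j + x i * b i j).det =
      ∑ S : Finset ι, (∏ i ∈ S, x i) * (Matrix.of (S.piecewise b a)).det := by
  have hpiece (S : Finset ι) : S.piecewise (fun i => x i • b i) a =
      S.piecewise (fun i => x i • S.piecewise b a i) (S.piecewise b a) := by
    ext i : 1
    by_cases hi : i ∈ S <;> simp [hi]
  calc
    _ = Matrix.detRowAlternating ((fun i => x i • b i) + a) := by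
      change Matrix.det _ = Matrix.det _
      congr 1
      ext i j
      simp [add_comm]
    _ = ∑ S : Finset ι, Matrix.detRowAlternating (S.piecewise (fun i => x i • b i) a) :=
      Matrix.detRowAlternating.map_add_univ _ _
    _ = _ := Finset.sum_congr rfl fun S _ => by
      rw [hpiece]
      exact Matrix.detRowAlternating.toMultilinearMap.map_piecewise_smul x _ S

theorem det_ite_eq_of_strictMono [LinearOrder ι] {α : Type*} [PartialOrder α] [DecidableEq α]
    {a b : ι → α} (ha : StrictMono a) (hb : StrictMono b) :
    (Matrix.of fun i j => if a i = b j then (1 : R) else 0).det = if a = b then 1 else 0 := by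
  split_ifs with hab
  · have hone : (Matrix.of fun i j => if a i = b j then (1 : R) else 0) = 1 := by
      ext i j
      simp [hab, Matrix.one_apply, hb.injective.eq_iff]
    rw [hone, Matrix.det_one]
  · obtain ⟨i, hi⟩ : ∃ i, a i ∉ Set.range b := by
      by_contra! hsub
      have hrange : Set.range a = Set.range b := by
        refine Set.eq_of_subset_of_ncard_le (Set.range_subset_iff.2 hsub) ?_
        simp [Set.ncard_range_of_injective, ha.injective, hb.injective]
      exact hab ((ha.range_inj hb).1 hrange)
    refine Matrix.det_eq_zero_of_row_eq_zero i fun j => ?_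
    exact if_neg fun hij => hi ⟨j, hij.symm⟩

end Determinants

section Raise

variable {ι : Type*} [DecidableEq ι] {c m : ι → ℤ} {S : Finset ι} {i : ι}

/-- The function `c` raised by one on the set `S`. If `c j` bounds the contents in column `j` of a
shape from below, this shortens the columns in `S` by their last cell. -/
def raiseOn (c : ι → ℤ) (S : Finset ι) : ι → ℤ := S.piecewise (c + 1) c

theorem raiseOn_apply (c : ι → ℤ) (S : Finset ι) (i : ι) :
    raiseOn c S i = if i ∈ S then c i + 1 else c i := rfl

theorem raiseOn_of_mem (hi : i ∈ S) : raiseOn c S i = c i + 1 := if_pos hi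

theorem raiseOn_of_notMem (hi : i ∉ S) : raiseOn c S i = c i := if_neg hi

theorem le_raiseOn (c : ι → ℤ) (S : Finset ι) : c ≤ raiseOn c S :=
  S.le_piecewise_of_le_of_le (le_add_of_nonneg_right zero_le_one) le_rfl

theorem add_one_le_of_raiseOn_le (h : raiseOn c S ≤ m) (hi : i ∈ S) : c i + 1 ≤ m i :=
  raiseOn_of_mem hi ▸ h i

theorem monotone_raiseOn [PartialOrder ι] (hc : StrictMono c) (S : Finset ι) :
    Monotone (raiseOn c S) := by
  refine monotone_iff_forall_lt.2 fun i j hij => ?_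
  have := hc hij
  simp only [raiseOn_apply]
  split_ifs <;> omega

end Raise

section Fillings

variable {α : Type*} [DecidableEq α] {n : ℕ} {D : Finset α}

/-- A filling of `D` with entries in `Fin n`, extended to all cells by the new largest entry
`Fin.last n`. -/
def extendLast (T : D → Fin n) (p : α) : Fin (n + 1) :=
  if h : p ∈ D then (T ⟨p, h⟩).castSucc else Fin.last n

theorem extendLast_of_mem (T : D → Fin n) {p : α} (h : p ∈ D) :
    extendLast T p = (T ⟨p, h⟩).castSucc := dif_pos h

theorem extendLast_of_notMem (T : D → Fin n) {p : α} (h : p ∉ D) :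
    extendLast T p = Fin.last n := dif_neg h

theorem extendLast_lt_last_iff (T : D → Fin n) {p : α} :
    extendLast T p < Fin.last n ↔ p ∈ D := by
  by_cases h : p ∈ D
  · simp [extendLast_of_mem T h, h, Fin.castSucc_lt_last]
  · simp [extendLast_of_notMem T h, h]

theorem eq_of_extendLast_eqOn {C D' : Finset α} (hD : D ⊆ C) (hD' : D' ⊆ C) {T : D → Fin n}
    {T' : D' → Fin n} (h : ∀ p ∈ C, extendLast T p = extendLast T' p) :
    (⟨D, T⟩ : Σ D : Finset α, D → Fin n) = ⟨D', T'⟩ := by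
  obtain rfl : D = D' := by
    ext p
    by_cases hp : p ∈ C
    · rw [← extendLast_lt_last_iff T, h p hp, extendLast_lt_last_iff]
    · exact iff_of_false (fun h => hp (hD h)) fun h => hp (hD' h)
  congr
  ext1 p
  have := h p (hD p.2)
  rwa [extendLast_of_mem T p.2, extendLast_of_mem T' p.2, Fin.castSucc_inj] at this

theorem exists_extendLast_eq {C : Finset α} (T : C → Fin (n + 1)) :
    ∃ D ⊆ C, ∃ T' : D → Fin n, (fun p : C => extendLast T' p) = T := by
  refine ⟨({p | T p < Fin.last n} : Finset C).map (Function.Embedding.subtype _),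
    Finset.map_subtype_subset _,
    fun p => (T ⟨p, Finset.property_of_mem_map_subtype _ p.2⟩).castPred ?_, ?_⟩
  · obtain ⟨p, hp⟩ := p
    obtain ⟨_, hlt⟩ : ∃ h : p ∈ C, T ⟨p, h⟩ < Fin.last n := by simpa using hp
    exact hlt.ne
  · ext1 p
    by_cases hp : T p < Fin.last n
    · rw [extendLast_of_mem _ (by simpa using hp), Fin.castSucc_castPred]
    · rw [extendLast_of_notMem _ (by simpa using hp), Fin.last_le_iff.1 (not_lt.1 hp)]

theorem sum_fillings_succ {M : Type*} [AddCommMonoid M] (C : Finset α)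
    (F : (C → Fin (n + 1)) → M) :
    ∑ T, F T = ∑ D ∈ C.powerset, ∑ T : D → Fin n, F fun p => extendLast T p := by
  rw [Finset.sum_sigma']
  symm
  refine Finset.sum_bij (fun x _ p => extendLast x.2 p) (fun _ _ => Finset.mem_univ _) ?_ ?_
    fun _ _ => rfl
  · rintro ⟨D, T⟩ hD ⟨D', T'⟩ hD' h
    simp only [Finset.mem_sigma, Finset.mem_powerset, Finset.mem_univ, and_true] at hD hD'
    exact eq_of_extendLast_eqOn hD hD' fun p hp => congrFun h ⟨p, hp⟩
  · intro T _
    obtain ⟨D, hD, T', hT'⟩ := exists_extendLast_eq T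
    exact ⟨⟨D, T'⟩, by simpa using hD, hT'⟩

theorem prod_extendLast {R : Type*} [CommMonoid R] {C : Finset α} (hD : D ⊆ C) (T : D → Fin n)
    (f : Fin (n + 1) → α → R) :
    ∏ p : C, f (extendLast T p) p =
      (∏ p ∈ C \ D, f (Fin.last n) p) * ∏ p : D, f (T p).castSucc p := by
  rw [Finset.prod_coe_sort C fun p => f (extendLast T p) p, ← Finset.prod_sdiff hD]
  congr 1
  · refine Finset.prod_congr rfl fun p hp => ?_
    rw [extendLast_of_notMem T (Finset.mem_sdiff.1 hp).2]
  · rw [← Finset.prod_coe_sort]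
    refine Finset.prod_congr rfl fun p _ => ?_
    rw [extendLast_of_mem T p.2]

end Fillings

section Semistandard

variable {R : Type*} [CommRing R] {n : ℕ} {C D : Finset (ℕ × ℕ)}

/-- Semistandard fillings of a finite set of cells: entries increase weakly to the right and
strictly downwards between neighbouring cells, as in `schurGen`. -/
structure IsSemistandard {α : Type*} [Preorder α] (T : C → α) : Prop where
  row_le ⦃i j : ℕ⦄ (h : (i, j) ∈ C) (h' : (i, j + 1) ∈ C) : T ⟨_, h⟩ ≤ T ⟨_, h'⟩
  col_lt ⦃i j : ℕ⦄ (h : (i, j) ∈ C) (h' : (i + 1, j) ∈ C) : T ⟨_, h⟩ < T ⟨_, h'⟩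

theorem schurGen_eq_sum_isSemistandard (C : Finset (ℕ × ℕ)) (X : Fin n → ℤ → R) :
    schurGen n C X =
      ∑ T : C → Fin n with IsSemistandard T, ∏ p : C, X (T p) (content p) := by
  rw [schurGen]
  congr! 2 with T
  constructor
  · rintro ⟨hrow, hcol⟩
    exact ⟨fun i j h h' => hrow _ _ ⟨rfl, rfl⟩, fun i j h h' => hcol _ _ ⟨rfl, rfl⟩⟩
  · rintro ⟨hrow, hcol⟩
    constructor
    · rintro ⟨⟨i, j⟩, h⟩ ⟨q, h'⟩ hq
      obtain rfl : q = (i, j + 1) := Prod.ext hq.1 hq.2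
      exact hrow h h'
    · rintro ⟨⟨i, j⟩, h⟩ ⟨q, h'⟩ hq
      obtain rfl : q = (i + 1, j) := Prod.ext hq.1 hq.2
      exact hcol h h'

/-- `D` is what remains of `C` after the cells with the largest entry are removed from a
semistandard filling. For skew shapes `D ⊆ C` this says that `C \ D` is a horizontal strip along
the outer border of `C`. -/
structure IsStripRemoval (C D : Finset (ℕ × ℕ)) : Prop where
  left_mem ⦃i j : ℕ⦄ (h : (i, j) ∈ C) (h' : (i, j + 1) ∈ D) : (i, j) ∈ D
  above_mem ⦃i j : ℕ⦄ (h : (i, j) ∈ C) (h' : (i + 1, j) ∈ C) : (i, j) ∈ D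

theorem isSemistandard_extendLast_iff (hD : D ⊆ C) (T : D → Fin n) :
    IsSemistandard (fun p : C => extendLast T p) ↔ IsStripRemoval C D ∧ IsSemistandard T := by
  constructor
  · refine fun hT => ⟨⟨fun i j h h' => ?_, fun i j h h' => ?_⟩,
      fun i j h h' => ?_, fun i j h h' => ?_⟩
    · exact (extendLast_lt_last_iff T).1
        ((hT.row_le h (hD h')).trans_lt ((extendLast_lt_last_iff T).2 h'))
    · exact (extendLast_lt_last_iff T).1 ((hT.col_lt h h').trans_le (Fin.le_last _))
    · simpa [extendLast_of_mem, h, h'] using hT.row_le (hD h) (hD h')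
    · simpa [extendLast_of_mem, h, h'] using hT.col_lt (hD h) (hD h')
  · rintro ⟨hCD, hT⟩
    refine ⟨fun i j h h' => ?_, fun i j h h' => ?_⟩
    · by_cases hj : (i, j + 1) ∈ D
      · simpa [extendLast_of_mem, hj, hCD.left_mem h hj] using hT.row_le (hCD.left_mem h hj) hj
      · simpa [extendLast_of_notMem T hj] using Fin.le_last _
    · have hi' := hCD.above_mem h h'
      by_cases hi : (i + 1, j) ∈ D
      · simpa [extendLast_of_mem, hi, hi'] using hT.col_lt hi' hi
      · simpa [extendLast_of_notMem T hi, extendLast_lt_last_iff] using hi'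

theorem schurGen_succ (C : Finset (ℕ × ℕ)) (X : Fin (n + 1) → ℤ → R) :
    schurGen (n + 1) C X = ∑ D ∈ C.powerset with IsStripRemoval C D,
      (∏ p ∈ C \ D, X (Fin.last n) (content p)) * schurGen n D fun k => X k.castSucc := by
  rw [schurGen_eq_sum_isSemistandard, Finset.sum_filter,
    sum_fillings_succ C fun T => if IsSemistandard T then ∏ p, X (T p) (content p) else 0,
    Finset.sum_filter]
  refine Finset.sum_congr rfl fun D hD => ?_
  rw [Finset.mem_powerset] at hD
  simp only [isSemistandard_extendLast_iff hD, prod_extendLast hD _ fun k p => X k (content p),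
    schurGen_eq_sum_isSemistandard, Finset.sum_filter, Finset.mul_sum, ite_and, mul_ite, mul_zero]
  split_ifs <;> simp

theorem schurGen_zero (C : Finset (ℕ × ℕ)) (X : Fin 0 → ℤ → R) :
    schurGen 0 C X = if C = ∅ then 1 else 0 := by
  rw [schurGen_eq_sum_isSemistandard]
  split_ifs with hC
  · subst hC
    have (T : (∅ : Finset (ℕ × ℕ)) → Fin 0) : IsSemistandard T :=
      ⟨fun i j h => absurd h (Finset.notMem_empty _), fun i j h => absurd h (Finset.notMem_empty _)⟩
    simp [this]
  · obtain ⟨p, hp⟩ := Finset.nonempty_iff_ne_empty.2 hC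
    exact Finset.sum_eq_zero fun T _ => (T ⟨p, hp⟩).elim0

end Semistandard

section ColumnCells

variable {R : Type*} [CommRing R] {N n : ℕ} {c m : Fin N → ℤ} {S : Finset (Fin N)}
  {D : Finset (ℕ × ℕ)}

/-- The shape whose column `j` consists of the cells with content in the interval `(c j, m j]`.
Contents larger than `j` do not occur in column `j`, so `m j ≤ j` is assumed where it matters. -/
def columnCells (c m : Fin N → ℤ) : Finset (ℕ × ℕ) :=
  Finset.univ.biUnion fun j : Fin N => Finset.Ico (j - m j).toNat (j - c j).toNat ×ˢ {(j : ℕ)}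

theorem mem_columnCells (i : ℕ) (j : Fin N) :
    (i, (j : ℕ)) ∈ columnCells c m ↔ c j < (j : ℤ) - i ∧ (j : ℤ) - i ≤ m j := by
  simp only [columnCells, Finset.mem_biUnion, Finset.mem_univ, Finset.mem_product,
    Finset.mem_Ico, Finset.mem_singleton, true_and, Fin.val_inj, exists_eq_right']
  omega

theorem exists_fin_eq_of_mem_columnCells {p : ℕ × ℕ} (hp : p ∈ columnCells c m) :
    ∃ j : Fin N, p.2 = j := by
  simp only [columnCells, Finset.mem_biUnion, Finset.mem_product, Finset.mem_singleton] at hp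
  obtain ⟨j, -, -, hj⟩ := hp
  exact ⟨j, hj⟩

theorem columnCells_eq_empty_iff (hm : ∀ j, m j ≤ j) : columnCells c m = ∅ ↔ m ≤ c := by
  constructor
  · refine fun hempty => Pi.le_def.2 fun j => ?_
    by_contra! hj
    have hcell : ((j - m j).toNat, (j : ℕ)) ∈ columnCells c m := by
      have := hm j
      rw [mem_columnCells]
      omega
    simp [hempty] at hcell
  · refine fun hmc => Finset.eq_empty_of_forall_notMem fun ⟨i, j⟩ hp => ?_
    obtain ⟨j, rfl⟩ := exists_fin_eq_of_mem_columnCells hp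
    have := (mem_columnCells i j).1 hp
    have := Pi.le_def.1 hmc j
    omega

theorem columnCells_subset {c' : Fin N → ℤ} (h : c ≤ c') : columnCells c' m ⊆ columnCells c m := by
  intro ⟨i, j⟩ hp
  obtain ⟨j, rfl⟩ := exists_fin_eq_of_mem_columnCells hp
  rw [mem_columnCells] at hp ⊢
  exact ⟨(h j).trans_lt hp.1, hp.2⟩

theorem mem_columnCells_sdiff (hS : raiseOn c S ≤ m) (i : ℕ) (j : Fin N) :
    (i, (j : ℕ)) ∈ columnCells c m \ columnCells (raiseOn c S) m ↔
      j ∈ S ∧ (j : ℤ) - i = c j + 1 := by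
  have hj := Pi.le_def.1 hS j
  rw [raiseOn_apply] at hj
  rw [Finset.mem_sdiff, mem_columnCells, mem_columnCells, raiseOn_apply]
  split_ifs at hj ⊢ with hjS <;> simp only [hjS, true_and, false_and, iff_false] <;> omega

theorem isStripRemoval_columnCells (hmono : StrictMono (raiseOn c S)) :
    IsStripRemoval (columnCells c m) (columnCells (raiseOn c S) m) := by
  refine ⟨fun i j h h' => ?_, fun i j h h' => ?_⟩
  · obtain ⟨j, rfl⟩ := exists_fin_eq_of_mem_columnCells h
    obtain ⟨k, hk⟩ := exists_fin_eq_of_mem_columnCells h'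
    dsimp only at hk
    rw [hk] at h'
    rw [mem_columnCells] at h h' ⊢
    have := hmono (show j < k from Fin.lt_def.2 (by omega))
    omega
  · obtain ⟨j, rfl⟩ := exists_fin_eq_of_mem_columnCells h
    rw [mem_columnCells] at h h' ⊢
    rw [raiseOn_apply]
    split_ifs <;> omega

theorem prod_columnCells_sdiff {M : Type*} [CommMonoid M] (hm : ∀ j, m j ≤ j)
    (hS : raiseOn c S ≤ m) (x : ℤ → M) :
    ∏ p ∈ columnCells c m \ columnCells (raiseOn c S) m, x (content p) =
      ∏ j ∈ S, x (c j + 1) := by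
  symm
  refine Finset.prod_bij (fun j _ => ((j - (c j + 1)).toNat, (j : ℕ))) ?_ ?_ ?_ ?_
  · intro j hj
    rw [mem_columnCells_sdiff hS]
    have := add_one_le_of_raiseOn_le hS hj
    have := hm j
    exact ⟨hj, by omega⟩
  · exact fun j _ k _ h => Fin.ext (Prod.ext_iff.1 h).2
  · intro ⟨i, j⟩ hp
    obtain ⟨j, rfl⟩ := exists_fin_eq_of_mem_columnCells (Finset.mem_sdiff.1 hp).1
    obtain ⟨hj, hi⟩ := (mem_columnCells_sdiff hS i j).1 hp
    exact ⟨j, hj, Prod.ext (by dsimp only; omega) rfl⟩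
  · intro j hj
    have := add_one_le_of_raiseOn_le hS hj
    have := hm j
    congr 1
    simp only [content]
    omega

/-- The columns of a shape `C` that meet the strip `C \ D`. -/
noncomputable def stripColumns (N : ℕ) (C D : Finset (ℕ × ℕ)) : Finset (Fin N) :=
  {j | ∃ i : ℕ, (i, (j : ℕ)) ∈ C \ D}

theorem mem_stripColumns {C : Finset (ℕ × ℕ)} {j : Fin N} :
    j ∈ stripColumns N C D ↔ ∃ i : ℕ, (i, (j : ℕ)) ∈ C \ D := by
  simp [stripColumns]

theorem stripColumns_columnCells (hm : ∀ j, m j ≤ j) (hS : raiseOn c S ≤ m) :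
    stripColumns N (columnCells c m) (columnCells (raiseOn c S) m) = S := by
  ext j
  simp only [mem_stripColumns, mem_columnCells_sdiff hS, exists_and_left, and_iff_left_iff_imp]
  intro hj
  have := add_one_le_of_raiseOn_le hS hj
  have := hm j
  exact ⟨(j - (c j + 1)).toNat, by omega⟩

theorem IsStripRemoval.content_eq (hD : IsStripRemoval (columnCells c m) D) {i : ℕ} {j : Fin N}
    (h : (i, (j : ℕ)) ∈ columnCells c m \ D) : (j : ℤ) - i = c j + 1 := by
  obtain ⟨hC, hnD⟩ := Finset.mem_sdiff.1 h
  have hbelow := mt (hD.above_mem hC) hnD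
  rw [mem_columnCells] at hC hbelow
  push_cast at hbelow
  omega

theorem IsStripRemoval.raiseOn_le (hD : IsStripRemoval (columnCells c m) D) (hcm : c ≤ m) :
    raiseOn c (stripColumns N (columnCells c m) D) ≤ m := by
  refine Pi.le_def.2 fun j => ?_
  by_cases hj : j ∈ stripColumns N (columnCells c m) D
  · obtain ⟨i, hi⟩ := mem_stripColumns.1 hj
    have := hD.content_eq hi
    have := (mem_columnCells i j).1 (Finset.mem_sdiff.1 hi).1
    rw [raiseOn_of_mem hj]
    omega
  · exact raiseOn_of_notMem hj ▸ hcm j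

theorem IsStripRemoval.strictMono_raiseOn (hD : IsStripRemoval (columnCells c m) D)
    (hc : StrictMono c) (hm : StrictMono m) :
    StrictMono (raiseOn c (stripColumns N (columnCells c m) D)) := by
  refine (strictMono_iff_forall_covBy _).2 fun j k hjk => ?_
  have hcjk := hc hjk.lt
  by_cases hk : k ∈ stripColumns N (columnCells c m) D
  · simp only [raiseOn_apply, if_pos hk]
    split_ifs <;> omega
  by_cases hj : j ∈ stripColumns N (columnCells c m) D
  · suffices c k ≠ c j + 1 by
      rw [raiseOn_of_mem hj, raiseOn_of_notMem hk]
      omega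
    intro hck
    obtain ⟨i, hi⟩ := mem_stripColumns.1 hj
    have hij := hD.content_eq hi
    obtain ⟨hC, hnD⟩ := Finset.mem_sdiff.1 hi
    have hval : (j : ℕ) + 1 = k := by simpa using hjk
    have hright : (i, (k : ℕ)) ∈ columnCells c m := by
      have := hm hjk.lt
      rw [mem_columnCells] at hC ⊢
      omega
    have hrightD : (i, (j : ℕ) + 1) ∈ D := by
      by_contra h
      exact hk (mem_stripColumns.2 ⟨i, Finset.mem_sdiff.2 ⟨hright, hval ▸ h⟩⟩)
    exact hnD (hD.left_mem hC hrightD)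
  · rwa [raiseOn_of_notMem hj, raiseOn_of_notMem hk]

theorem IsStripRemoval.columnCells_raiseOn (hD : IsStripRemoval (columnCells c m) D)
    (hDC : D ⊆ columnCells c m) (hcm : c ≤ m) :
    columnCells (raiseOn c (stripColumns N (columnCells c m) D)) m = D := by
  suffices hstrip : columnCells c m \
      columnCells (raiseOn c (stripColumns N (columnCells c m) D)) m =
        columnCells c m \ D by
    rw [← Finset.sdiff_sdiff_eq_self (columnCells_subset (le_raiseOn c _)), hstrip,
      Finset.sdiff_sdiff_eq_self hDC]
  ext ⟨i, j⟩
  constructor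
  · intro hp
    obtain ⟨j, rfl⟩ := exists_fin_eq_of_mem_columnCells (Finset.mem_sdiff.1 hp).1
    obtain ⟨hj, hij⟩ := (mem_columnCells_sdiff (hD.raiseOn_le hcm) i j).1 hp
    obtain ⟨i', hi'⟩ := mem_stripColumns.1 hj
    have := hD.content_eq hi'
    obtain rfl : i = i' := by omega
    exact hi'
  · intro hp
    obtain ⟨j, rfl⟩ := exists_fin_eq_of_mem_columnCells (Finset.mem_sdiff.1 hp).1
    exact (mem_columnCells_sdiff (hD.raiseOn_le hcm) i j).2
      ⟨mem_stripColumns.2 ⟨i, hp⟩, hD.content_eq hp⟩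

theorem schurGen_columnCells_succ (hc : StrictMono c) (hm : StrictMono m) (hm' : ∀ j, m j ≤ j)
    (hcm : c ≤ m) (X : Fin (n + 1) → ℤ → R) :
    schurGen (n + 1) (columnCells c m) X =
      ∑ S : Finset (Fin N) with StrictMono (raiseOn c S) ∧ raiseOn c S ≤ m,
        (∏ j ∈ S, X (Fin.last n) (c j + 1)) *
          schurGen n (columnCells (raiseOn c S) m) fun k => X k.castSucc := by
  rw [schurGen_succ]
  symm
  refine Finset.sum_bij' (fun S _ => columnCells (raiseOn c S) m)
    (fun D _ => stripColumns N (columnCells c m) D) ?_ ?_ ?_ ?_ ?_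
  · intro S hS
    obtain ⟨hmono, -⟩ := (Finset.mem_filter.1 hS).2
    simp only [Finset.mem_filter, Finset.mem_powerset]
    exact ⟨columnCells_subset (le_raiseOn c S), isStripRemoval_columnCells hmono⟩
  · intro D hD
    have hD := (Finset.mem_filter.1 hD).2
    simp only [Finset.mem_filter, Finset.mem_univ, true_and]
    exact ⟨hD.strictMono_raiseOn hc hm, hD.raiseOn_le hcm⟩
  · exact fun S hS => stripColumns_columnCells hm' (Finset.mem_filter.1 hS).2.2
  · intro D hD
    obtain ⟨hDC, hD⟩ := Finset.mem_filter.1 hD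
    exact hD.columnCells_raiseOn (Finset.mem_powerset.1 hDC) hcm
  · intro S hS
    rw [prod_columnCells_sdiff hm' (Finset.mem_filter.1 hS).2.2]

end ColumnCells

section Elementary

variable {R : Type*} [CommRing R] {n : ℕ}

theorem eGen_zero_left (r m : ℤ) (X : Fin 0 → ℤ → R) :
    eGen 0 r m X = if r = 0 then 1 else 0 := by
  have hempty : colCells r.toNat = ∅ ↔ r ≤ 0 := by simp [colCells]
  simp only [eGen, schurGen_zero, hempty]
  split_ifs <;> first | rfl | omega

theorem colCells_eq_columnCells (r : ℕ) :
    colCells r = columnCells (fun _ : Fin 1 => -(r : ℤ)) 0 := by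
  ext ⟨i, j⟩
  constructor
  · intro h
    obtain ⟨rfl, hi⟩ : 0 = j ∧ i < r := by simpa [colCells, and_comm] using h
    exact (mem_columnCells i (0 : Fin 1)).2 (by simpa using hi)
  · intro h
    obtain ⟨k, rfl⟩ := exists_fin_eq_of_mem_columnCells h
    have := (mem_columnCells i k).1 h
    simp only [colCells, Finset.mem_image, Finset.mem_range, Prod.mk.injEq, Pi.zero_apply] at this ⊢
    exact ⟨i, by omega, rfl, by omega⟩

theorem eGen_eq_schurGen_columnCells (r m : ℤ) (X : Fin n → ℤ → R) :
    eGen n r m X = if 0 ≤ r then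
      schurGen n (columnCells (fun _ : Fin 1 => -r) 0) fun k d => X k (m + d) else 0 := by
  rw [eGen]
  rcases le_or_gt 0 r with hr | hr
  · rw [if_neg hr.not_gt, if_pos hr, colCells_eq_columnCells, Int.toNat_of_nonneg hr]
  · rw [if_pos hr, if_neg hr.not_ge]

theorem eGen_succ (r m : ℤ) (X : Fin (n + 1) → ℤ → R) :
    eGen (n + 1) r m X = eGen n r m (fun k => X k.castSucc) +
      X (Fin.last n) (m - r + 1) * eGen n (r - 1) m fun k => X k.castSucc := by
  simp only [eGen_eq_schurGen_columnCells]
  rcases le_or_gt 0 r with hr | hr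
  · have huniv : (Finset.univ : Finset (Finset (Fin 1))) = {∅, {0}} := rfl
    have hraise_empty : raiseOn (fun _ : Fin 1 => -r) ∅ = fun _ => -r := Finset.piecewise_empty _ _
    have hraise : raiseOn (fun _ : Fin 1 => -r) {0} = fun _ => -(r - 1) := by
      ext j
      rw [raiseOn_of_mem (Finset.mem_singleton.2 (Subsingleton.elim j 0))]
      ring
    have hle : (fun _ : Fin 1 => -r) ≤ 0 := by simpa [Pi.le_def] using hr
    have hle' : (fun _ : Fin 1 => -(r - 1)) ≤ 0 ↔ 0 ≤ r - 1 := by simp [Pi.le_def]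
    rw [if_pos hr, if_pos hr, schurGen_columnCells_succ (Subsingleton.strictMono _)
      (Subsingleton.strictMono _) (by simp) hle, Finset.sum_filter, huniv,
      Finset.sum_pair (by simp)]
    simp only [hraise_empty, hraise, Subsingleton.strictMono, hle, hle', true_and,
      if_true, Finset.prod_empty, one_mul, Finset.prod_singleton, mul_ite, mul_zero]
    rw [show m + (-r + 1) = m - r + 1 by ring]
  · rw [if_neg hr.not_ge, if_neg hr.not_ge, if_neg (by omega), mul_zero, add_zero]

end Elementary

section Recursion

variable {R ι : Type*} [CommRing R] {n : ℕ} {c m : ι → ℤ}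

/-- The matrix of the dual Jacobi–Trudi determinant in terms of contents: the `(i, j)` entry is the
elementary function of a column with contents in the interval `(c i, m j]`. -/
noncomputable def eMatrix (n : ℕ) (c m : ι → ℤ) (X : Fin n → ℤ → R) : Matrix ι ι R :=
  Matrix.of fun i j => eGen n (m j - c i) (m j) X

theorem det_eMatrix_eq_zero [Fintype ι] [DecidableEq ι] (hc : ¬ Function.Injective c)
    (X : Fin n → ℤ → R) : (eMatrix n c m X).det = 0 := by
  obtain ⟨i, j, hij, hne⟩ := Function.not_injective_iff.1 hc
  exact Matrix.det_zero_of_row_eq hne (funext fun k => by simp [eMatrix, hij])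

theorem det_eMatrix_zero [Fintype ι] [LinearOrder ι] (hc : StrictMono c) (hm : StrictMono m)
    (X : Fin 0 → ℤ → R) : (eMatrix 0 c m X).det = if m = c then 1 else 0 := by
  rw [eMatrix]
  simp only [eGen_zero_left, sub_eq_zero, eq_comm (a := m _), eq_comm (a := m)]
  exact det_ite_eq_of_strictMono hc hm

theorem det_eMatrix_succ [Fintype ι] [DecidableEq ι] (c m : ι → ℤ) (X : Fin (n + 1) → ℤ → R) :
    (eMatrix (n + 1) c m X).det =
      ∑ S : Finset ι, (∏ j ∈ S, X (Fin.last n) (c j + 1)) *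
        (eMatrix n (raiseOn c S) m fun k => X k.castSucc).det := by
  simp only [eMatrix, eGen_succ, sub_sub_cancel, det_of_add_mul]
  refine Finset.sum_congr rfl fun S _ => ?_
  congr 3
  ext i j
  by_cases hi : i ∈ S <;> simp [hi, raiseOn_apply, sub_sub]

theorem det_eMatrix {N : ℕ} {c m : Fin N → ℤ} (hc : StrictMono c) (hm : StrictMono m)
    (hm' : ∀ j, m j ≤ j) (X : Fin n → ℤ → R) :
    (eMatrix n c m X).det = if c ≤ m then schurGen n (columnCells c m) X else 0 := by
  induction n generalizing c with
  | zero =>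
    simp only [det_eMatrix_zero hc hm, schurGen_zero, columnCells_eq_empty_iff hm', ← ite_and,
      ← le_antisymm_iff, eq_comm]
  | succ n ih =>
    have hterm (S : Finset (Fin N)) :
        (eMatrix n (raiseOn c S) m fun k => X k.castSucc).det =
          if StrictMono (raiseOn c S) ∧ raiseOn c S ≤ m then
            schurGen n (columnCells (raiseOn c S) m) (fun k => X k.castSucc) else 0 := by
      by_cases hS : StrictMono (raiseOn c S)
      · simp only [ih hS, hS, true_and]
      · rw [if_neg fun h => hS h.1]
        exact det_eMatrix_eq_zero (mt (monotone_raiseOn hc S).strictMono_iff_injective.2 hS) _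
    simp only [det_eMatrix_succ, hterm, mul_ite, mul_zero]
    split_ifs with hcm
    · rw [schurGen_columnCells_succ hc hm hm' hcm, Finset.sum_filter]
    · exact Finset.sum_eq_zero fun S _ => if_neg fun h => hcm ((le_raiseOn c S).trans h.2)

end Recursion

section Conjugate

variable {f g : ℕ → ℕ}

theorem mem_iff_lt_card_of_isLowerSet {s : Finset ℕ} (hs : IsLowerSet (s : Set ℕ)) {i : ℕ} :
    i ∈ s ↔ i < s.card := by
  obtain huniv | ⟨a, ha⟩ := hs.eq_univ_or_Iio
  · exact (Set.infinite_univ (huniv ▸ s.finite_toSet)).elim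
  · obtain rfl : s = Finset.range a := by rw [← Finset.coe_inj, ha, Finset.coe_range]
    simp

theorem lt_conjPart_iff (hf : Antitone f) (l i j : ℕ) :
    i < conjPart f l j ↔ i < l ∧ j < f i := by
  rw [conjPart, ← mem_iff_lt_card_of_isLowerSet, Finset.mem_filter, Finset.mem_range]
  intro a b hba ha
  rw [Finset.mem_coe, Finset.mem_filter, Finset.mem_range] at ha ⊢
  exact ⟨hba.trans_lt ha.1, ha.2.trans_le (hf hba)⟩

theorem antitone_conjPart (f : ℕ → ℕ) (l : ℕ) : Antitone (conjPart f l) := fun _ _ hjk =>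
  Finset.card_le_card (Finset.monotone_filter_right _ fun _ _ hk => hjk.trans_lt hk)

theorem conjPart_mono (h : f ≤ g) (l : ℕ) : conjPart f l ≤ conjPart g l := fun _ =>
  Finset.card_le_card (Finset.monotone_filter_right _ fun i _ hi => hi.trans_le (h i))

/-- The content of the first cell below column `j` in the Young diagram of `f`. -/
def columnEnd (f : ℕ → ℕ) (l N : ℕ) (j : Fin N) : ℤ := j - conjPart f l j

theorem columnEnd_le (f : ℕ → ℕ) (l N : ℕ) (j : Fin N) : columnEnd f l N j ≤ j :=
  sub_le_self _ (Nat.cast_nonneg _)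

theorem strictMono_columnEnd (f : ℕ → ℕ) (l N : ℕ) : StrictMono (columnEnd f l N) := by
  intro j k hjk
  have hval : (j : ℕ) < k := hjk
  have := antitone_conjPart f l hval.le
  simp only [columnEnd]
  omega

theorem columnEnd_anti (h : f ≤ g) (l N : ℕ) : columnEnd g l N ≤ columnEnd f l N := fun j =>
  sub_le_sub_left (Nat.cast_le.2 (conjPart_mono h l j)) _

theorem skewCells_eq_columnCells (hf : Antitone f) (hg : Antitone g) (l : ℕ) :
    skewCells f g l = columnCells (columnEnd f l (f 0)) (columnEnd g l (f 0)) := by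
  ext ⟨i, j⟩
  have hf' := lt_conjPart_iff hf l i j
  have hg' := lt_conjPart_iff hg l i j
  have hj : i < l ∧ j < f i → j < f 0 := fun h => h.2.trans_le (hf i.zero_le)
  constructor
  · intro hp
    simp only [skewCells, Finset.mem_filter, Finset.mem_product, Finset.mem_range] at hp
    refine (mem_columnCells i (⟨j, hp.1.2⟩ : Fin (f 0))).2 ?_
    simp only [columnEnd]
    omega
  · intro hp
    obtain ⟨j, rfl⟩ := exists_fin_eq_of_mem_columnCells hp
    simp only [mem_columnCells, columnEnd] at hp
    simp only [skewCells, Finset.mem_filter, Finset.mem_product, Finset.mem_range]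
    omega

end Conjugate

/-- **Dual Jacobi–Trudi type identity for ninth variation skew Schur functions.**
For partitions `μ ⊆ λ`,
`s_{λ/μ}(X) = det( e_{λ'_i - μ'_j - i + j}(τ^{-μ'_j + j - 1} X) )_{1 ≤ i,j ≤ l'}`
with `l' = λ_1` (stated with 0-indexed columns, so the shift exponent
`-μ'_j + j - 1` becomes `j - μ'_j` for `j : Fin l'`). -/
theorem dualJacobiTrudi_ninthVariation {R : Type*} [CommRing R] (n l : ℕ) (lam mu : ℕ → ℕ)
    (hlam : Antitone lam) (hmu : Antitone mu) (hsub : ∀ i, mu i ≤ lam i)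
    (hlen : ∀ i, l ≤ i → lam i = 0) (X : Fin n → ℤ → R) :
    schurGen n (skewCells lam mu l) X =
      Matrix.det (Matrix.of fun i j : Fin (lam 0) =>
        eGen n ((conjPart lam l (i : ℕ) : ℤ) - (conjPart mu l (j : ℕ) : ℤ) - (i : ℕ) + (j : ℕ))
          ((j : ℕ) - (conjPart mu l (j : ℕ) : ℤ)) X) := by
  have hdet := det_eMatrix (strictMono_columnEnd lam l (lam 0)) (strictMono_columnEnd mu l (lam 0))
    (columnEnd_le mu l (lam 0)) X
  rw [if_pos (columnEnd_anti hsub l (lam 0)), ← skewCells_eq_columnCells hlam hmu] at hdet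
  rw [← hdet]
  congr 1
  ext i j
  simp only [eMatrix, columnEnd, Matrix.of_apply]
  congr 1
  ring
end

section
/- For a strict partition λ of length p and X = (x_{k,c}), Y = (y_{k,c}), the generalized Q-function satisfies the row-based Pfaffian (Schur-type) identity: Q_λ(X, Y) = Pf( Q_{(λ_i, λ_j)}(X, Y) )_{1 ≤ i,j ≤ l}, where l = p if p is even and l = p+1 if p is odd (with λ_{p+1} = 0 and Q_{(λ_i, 0)}(X,Y) = Q_{(λ_i)}(X,Y)), and where for i < j the entry is the generalized skew Q-function of the two-row shifted shape (λ_i, λ_j), with the matrix extended antisymmetrically: Q_{(λ_j,λ_i)}(X,Y) := −Q_{(λ_i,λ_j)}(X,Y) for i < j and Q_{(λ_i,λ_i)}(X,Y) := 0. -/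
open Finset
open scoped Classical

/-- Boxes of the shifted skew diagram of strict partitions `lam/mu` (0-indexed):
row `i < l` occupies columns `i + mu i ≤ j < i + lam i`. -/
def shiftedCells (lam mu : ℕ → ℕ) (l : ℕ) : Finset (ℕ × ℕ) :=
  (Finset.range l ×ˢ Finset.range (l + lam 0)).filter fun p =>
    p.1 + mu p.1 ≤ p.2 ∧ p.2 < p.1 + lam p.1

/-- A primed-alphabet entry: `(k, true)` stands for the primed entry `(k+1)'` and
`(k, false)` for the unprimed entry `k+1`.  `ordE` realizes the total order
`1' < 1 < 2' < 2 < ⋯ < n' < n`. -/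
def ordE {n : ℕ} (e : Fin n × Bool) : ℕ := 2 * (e.1 : ℕ) + (if e.2 then 0 else 1)

/-- The ninth variation (generalized) skew Q-function: sum over primed shifted
tableaux on the cell set `C` (entries weakly increasing along rows and columns,
no repeated primed entry in a row, no repeated unprimed entry in a column),
weighting an unprimed entry `k` in a box of content `c` by `X k c` and a primed
entry `k'` by `Y k c`. -/
noncomputable def QGen {R : Type*} [CommRing R] (n : ℕ) (C : Finset (ℕ × ℕ))
    (X Y : Fin n → ℤ → R) : R :=
  ∑ T ∈ Finset.univ.filter (fun T : {p // p ∈ C} → Fin n × Bool =>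
      (∀ p q : {p // p ∈ C}, (q : ℕ × ℕ).1 = (p : ℕ × ℕ).1 ∧
          (q : ℕ × ℕ).2 = (p : ℕ × ℕ).2 + 1 →
          ordE (T p) ≤ ordE (T q) ∧ ¬(T p = T q ∧ (T p).2 = true)) ∧
      (∀ p q : {p // p ∈ C}, (q : ℕ × ℕ).1 = (p : ℕ × ℕ).1 + 1 ∧
          (q : ℕ × ℕ).2 = (p : ℕ × ℕ).2 →
          ordE (T p) ≤ ordE (T q) ∧ ¬(T p = T q ∧ (T p).2 = false))),
    ∏ p : {p // p ∈ C},
      (if (T p).2 then Y (T p).1 (content (p : ℕ × ℕ)) else X (T p).1 (content (p : ℕ × ℕ)))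

/-- The Pfaffian of a `2m × 2m` matrix, as the sum over perfect matchings
(encoded as permutations `σ` in canonical form) of the sign of `σ` times the
product of the matched entries. -/
noncomputable def pfaffian {R : Type*} [CommRing R] {m : ℕ}
    (A : Matrix (Fin (2 * m)) (Fin (2 * m)) R) : R :=
  ∑ σ ∈ Finset.univ.filter (fun σ : Equiv.Perm (Fin (2 * m)) =>
      (∀ i : Fin m, σ ⟨2 * (i : ℕ), by have := i.isLt; omega⟩ <
          σ ⟨2 * (i : ℕ) + 1, by have := i.isLt; omega⟩) ∧
      (∀ i j : Fin m, i < j → σ ⟨2 * (i : ℕ), by have := i.isLt; omega⟩ <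
          σ ⟨2 * (j : ℕ), by have := j.isLt; omega⟩)),
    (Equiv.Perm.sign σ : ℤ) •
      ∏ i : Fin m, A (σ ⟨2 * (i : ℕ), by have := i.isLt; omega⟩)
        (σ ⟨2 * (i : ℕ) + 1, by have := i.isLt; omega⟩)

/-- The generalized skew Q-function of the two-row shifted shape `(a, b)`
(for `b = 0`, the one-row shape `(a)`). -/
noncomputable def qTwoRow {R : Type*} [CommRing R] (n a b : ℕ) (X Y : Fin n → ℤ → R) : R :=
  QGen n (shiftedCells (fun i => if i = 0 then a else if i = 1 then b else 0) (fun _ => 0) 2) X Y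

/-!
Removing the largest letter from a tableau shortens each row separately, except that the shortened
rows must again form a strip. Encode a row by a basis vector indexed by its length. Removal from a
single row is then a linear operator `T`, and applying an alternating map to `T v₁, …, T vₖ`
enforces the strip conditions by itself: for a primed letter the forbidden terms have two equal
rows, and for an unprimed letter they cancel after subtracting multiples of lower rows from higher
ones. As the Pfaffian of `B vᵢ vⱼ` is alternating in the vectors `vᵢ`, the Pfaffian of the two-row
tableau sums obeys the same branching rule as the tableau sum itself, and induction on the number
of letters applies. Lengths are shifted by one, so that index one is an empty row and index zero
the row appended for odd `p`: an actual row may become empty, and must then stay independent of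
the appended one. Such a pair of rows has tableau sum `1` and can be dropped from the Pfaffian.
-/

section Pfaffian

/-- The first position of the `i`-th pair `(2i, 2i + 1)` of a perfect matching. -/
def pairFst {m : ℕ} (i : Fin m) : Fin (2 * m) := ⟨2 * i, by have := i.isLt; omega⟩

/-- The second position of the `i`-th pair `(2i, 2i + 1)` of a perfect matching. -/
def pairSnd {m : ℕ} (i : Fin m) : Fin (2 * m) := ⟨2 * i + 1, by have := i.isLt; omega⟩

/-- The canonical form of the permutations that encode perfect matchings in `pfaffian`. -/
structure IsMatchingPerm {m : ℕ} (σ : Equiv.Perm (Fin (2 * m))) : Prop where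
  fst_lt_snd (i : Fin m) : σ (pairFst i) < σ (pairSnd i)
  strictMono_fst : StrictMono fun i => σ (pairFst i)

theorem pfaffian_eq_sum {R : Type*} [CommRing R] {m : ℕ}
    (A : Matrix (Fin (2 * m)) (Fin (2 * m)) R) :
    pfaffian A = ∑ σ : Equiv.Perm (Fin (2 * m)) with IsMatchingPerm σ,
      (Equiv.Perm.sign σ : ℤ) • ∏ i : Fin m, A (σ (pairFst i)) (σ (pairSnd i)) :=
  Finset.sum_congr (Finset.filter_congr fun _ _ =>
    ⟨fun h => ⟨h.1, fun i j => h.2 i j⟩, fun h => ⟨h.1, fun _ _ hij => h.2 hij⟩⟩) fun _ _ => rfl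

theorem pfaffian_congr {R : Type*} [CommRing R] {m : ℕ}
    {A A' : Matrix (Fin (2 * m)) (Fin (2 * m)) R} (h : ∀ i j, i < j → A i j = A' i j) :
    pfaffian A = pfaffian A' := by
  rw [pfaffian_eq_sum, pfaffian_eq_sum]
  refine Finset.sum_congr rfl fun σ hσ => ?_
  congr! 2 with i
  exact h _ _ ((Finset.mem_filter.1 hσ).2.fst_lt_snd i)

/-- The permutation encoding the matching that pairs `0` with `j + 1` and matches the remaining
indices by `τ`. -/
def consPair {m : ℕ} (j : Fin (2 * m + 1)) (τ : Equiv.Perm (Fin (2 * m))) :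
    Equiv.Perm (Fin (2 * (m + 1))) :=
  Equiv.Perm.decomposeFin.symm (0, j.cycleRange.symm * Equiv.Perm.decomposeFin.symm (0, τ))

variable {m : ℕ} (j : Fin (2 * m + 1)) (τ : Equiv.Perm (Fin (2 * m))) (i : Fin m)

theorem consPair_fst_zero : consPair j τ (pairFst 0) = (0 : Fin (2 * m + 1 + 1)) :=
  Equiv.Perm.decomposeFin_symm_apply_zero _ _ |>.trans rfl

theorem consPair_snd_zero : consPair j τ (pairSnd 0) = j.succ := by
  refine (Equiv.Perm.decomposeFin_symm_apply_one (n := 2 * m) _ _).trans ?_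
  simp

theorem consPair_fst_succ :
    consPair j τ (pairFst i.succ) = (j.succAbove (τ (pairFst i))).succ := by
  refine (Equiv.Perm.decomposeFin_symm_apply_succ _ _ (pairFst i).succ).trans ?_
  simp

theorem consPair_snd_succ :
    consPair j τ (pairSnd i.succ) = (j.succAbove (τ (pairSnd i))).succ := by
  refine (Equiv.Perm.decomposeFin_symm_apply_succ _ _ (pairSnd i).succ).trans ?_
  simp

theorem sign_consPair :
    Equiv.Perm.sign (consPair j τ) = (-1) ^ (j : ℕ) * Equiv.Perm.sign τ := by
  refine (Equiv.Perm.decomposeFin.symm_sign _ _).trans ?_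
  simp [← Equiv.Perm.inv_def, Equiv.Perm.sign_inv, Fin.sign_cycleRange]

theorem isMatchingPerm_consPair : IsMatchingPerm (consPair j τ) ↔ IsMatchingPerm τ := by
  have hlt (a b : Fin (2 * m)) : (j.succAbove a).succ < (j.succAbove b).succ ↔ a < b := by
    rw [Fin.succ_lt_succ_iff, Fin.succAbove_lt_succAbove_iff]
  constructor
  · intro h
    refine ⟨fun i => ?_, fun i k hik => ?_⟩
    · have := h.fst_lt_snd i.succ
      rw [consPair_fst_succ, consPair_snd_succ] at this
      exact (hlt _ _).1 this
    · have := h.strictMono_fst (Fin.succ_lt_succ_iff.2 hik)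
      simp only [consPair_fst_succ] at this
      exact (hlt _ _).1 this
  · intro h
    refine ⟨fun i => ?_, fun i k hik => ?_⟩
    · cases i using Fin.cases with
      | zero =>
        rw [consPair_fst_zero, consPair_snd_zero]
        exact Fin.succ_pos j
      | succ i =>
        rw [consPair_fst_succ, consPair_snd_succ]
        exact (hlt _ _).2 (h.fst_lt_snd i)
    · obtain ⟨k, rfl⟩ := Fin.exists_succ_eq.2 (Fin.ne_zero_of_lt hik)
      cases i using Fin.cases with
      | zero =>
        simp only [consPair_fst_zero, consPair_fst_succ]
        exact Fin.succ_pos _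
      | succ i =>
        simp only [consPair_fst_succ]
        exact (hlt _ _).2 (h.strictMono_fst (Fin.succ_lt_succ_iff.1 hik))

theorem exists_consPair_eq (σ : Equiv.Perm (Fin (2 * (m + 1))))
    (h : σ (pairFst 0) = (0 : Fin (2 * m + 1 + 1))) : ∃ j τ, consPair j τ = σ := by
  obtain ⟨⟨a, ρ⟩, rfl⟩ := Equiv.Perm.decomposeFin.symm.surjective σ
  obtain rfl : a = 0 := by
    simpa using (Equiv.Perm.decomposeFin_symm_apply_zero (n := 2 * m + 1) a ρ).symm.trans h
  obtain ⟨⟨b, τ⟩, hb⟩ := Equiv.Perm.decomposeFin.symm.surjective ((ρ 0).cycleRange * ρ)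
  obtain rfl : b = 0 := by simpa using congrArg (fun e : Equiv.Perm _ => e 0) hb
  refine ⟨ρ 0, τ, ?_⟩
  rw [consPair, hb, ← Equiv.Perm.inv_def, inv_mul_cancel_left]

theorem consPair_injective :
    Function.Injective fun p : Fin (2 * m + 1) × Equiv.Perm (Fin (2 * m)) =>
      consPair p.1 p.2 := by
  rintro ⟨j, τ⟩ ⟨j', τ'⟩ h
  dsimp only at h
  have hj : j = j' := Fin.succ_injective _ <| by
    rw [← consPair_snd_zero j τ, ← consPair_snd_zero j' τ', h]
  subst hj
  simpa [consPair] using h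

theorem IsMatchingPerm.apply_zero {σ : Equiv.Perm (Fin (2 * (m + 1)))}
    (h : IsMatchingPerm σ) : σ (pairFst 0) = (0 : Fin (2 * m + 1 + 1)) := by
  have hle (q : Fin (2 * (m + 1))) : σ (pairFst 0) ≤ σ q := by
    obtain ⟨i, hi | hi⟩ := Nat.even_or_odd' (q : ℕ)
    · rw [show q = pairFst ⟨i, by omega⟩ from Fin.ext hi]
      exact h.strictMono_fst.monotone (Fin.zero_le _)
    · rw [show q = pairSnd ⟨i, by omega⟩ from Fin.ext hi]
      exact (h.strictMono_fst.monotone (Fin.zero_le _)).trans (h.fst_lt_snd _).le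
  obtain ⟨q, hq⟩ := σ.surjective (0 : Fin (2 * m + 1 + 1))
  exact Fin.le_zero_iff.1 (hq ▸ hle q)

variable {R : Type*} [CommRing R]

theorem pfaffian_zero (A : Matrix (Fin (2 * 0)) (Fin (2 * 0)) R) : pfaffian A = 1 := by
  have huniv : (Finset.univ : Finset (Equiv.Perm (Fin (2 * 0)))) = {1} :=
    Finset.eq_singleton_iff_unique_mem.2 ⟨Finset.mem_univ _, fun σ _ => Equiv.ext fun i =>
      i.elim0⟩
  rw [pfaffian_eq_sum, huniv, Finset.filter_singleton,
    if_pos ⟨fun i => i.elim0, fun i => i.elim0⟩, Finset.sum_singleton]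
  simp

theorem prod_consPair (A : Matrix (Fin (2 * (m + 1))) (Fin (2 * (m + 1))) R) :
    ∏ i : Fin (m + 1), A (consPair j τ (pairFst i)) (consPair j τ (pairSnd i)) =
      A (0 : Fin (2 * m + 1 + 1)) j.succ *
        ∏ i : Fin m, A (j.succAbove (τ (pairFst i))).succ (j.succAbove (τ (pairSnd i))).succ := by
  simp only [Fin.prod_univ_succ, consPair_fst_zero, consPair_snd_zero, consPair_fst_succ,
    consPair_snd_succ]

theorem pfaffian_succ (A : Matrix (Fin (2 * (m + 1))) (Fin (2 * (m + 1))) R) :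
    pfaffian A = ∑ j : Fin (2 * m + 1),
      (-1) ^ (j : ℕ) * (A (0 : Fin (2 * m + 1 + 1)) j.succ *
        pfaffian (A.submatrix (fun i : Fin (2 * m) => (j.succAbove i).succ)
          (fun i : Fin (2 * m) => (j.succAbove i).succ))) := by
  simp only [pfaffian_eq_sum, Finset.mul_sum, ← Finset.sum_product']
  symm
  refine Finset.sum_bij (fun p _ => consPair p.1 p.2) (fun p hp => ?_)
    (fun p _ q _ h => consPair_injective h) (fun σ hσ => ?_) (fun p _ => ?_)
  · simpa [isMatchingPerm_consPair] using hp
  · simp only [Finset.mem_filter_univ] at hσ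
    obtain ⟨j, τ, rfl⟩ := exists_consPair_eq σ hσ.apply_zero
    exact ⟨(j, τ), by simpa using (isMatchingPerm_consPair j τ).1 hσ, rfl⟩
  · rw [prod_consPair, sign_consPair]
    simp only [Matrix.submatrix_apply, zsmul_eq_mul]
    push_cast
    ring

end Pfaffian

section PfaffianMap

variable {R V : Type*} [CommRing R] [AddCommGroup V] [Module R V]

/-- The linear functional on the exterior algebra that takes `v₁ ∧ ⋯ ∧ vₖ` to the Pfaffian of the
matrix `B vᵢ vⱼ`, obtained by deforming the exterior algebra along `-B` and projecting onto the
scalars. -/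
noncomputable def vacuum (B : LinearMap.BilinForm R V) (hB : B.IsAlt) :
    ExteriorAlgebra R V →ₗ[R] R :=
  ExteriorAlgebra.algebraMapInv.toLinearMap ∘ₗ
    CliffordAlgebra.changeForm (Q := 0) (Q' := 0) (B := -B)
      (by ext v; simp [hB.self_eq_zero v])

variable (B : LinearMap.BilinForm R V) (hB : B.IsAlt)

theorem vacuum_one : vacuum B hB 1 = 1 := by
  rw [vacuum, LinearMap.comp_apply]
  exact (congrArg _ (CliffordAlgebra.changeForm_one _)).trans
    (map_one ExteriorAlgebra.algebraMapInv)

theorem vacuum_ι_mul (v : V) (x : ExteriorAlgebra R V) :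
    vacuum B hB (ExteriorAlgebra.ι R v * x) =
      vacuum B hB (CliffordAlgebra.contractLeft (B v) x) := by
  have hdeform := CliffordAlgebra.changeForm_ι_mul (Q := 0) (Q' := 0) (B := -B)
      (by ext v; simp [hB.self_eq_zero v]) v x
  rw [vacuum, LinearMap.comp_apply, LinearMap.comp_apply, CliffordAlgebra.changeForm_contractLeft]
  refine (congrArg _ hdeform).trans ?_
  simp [ExteriorAlgebra.algebraMapInv]

theorem contractLeft_one (d : Module.Dual R V) :
    CliffordAlgebra.contractLeft d (1 : ExteriorAlgebra R V) = 0 :=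
  CliffordAlgebra.contractLeft_one (Q := 0) d

theorem contractLeft_ι_mul (d : Module.Dual R V) (v : V) (x : ExteriorAlgebra R V) :
    CliffordAlgebra.contractLeft d (ExteriorAlgebra.ι R v * x) =
      d v • x - ExteriorAlgebra.ι R v * CliffordAlgebra.contractLeft d x :=
  CliffordAlgebra.contractLeft_ι_mul d v x

theorem contractLeft_ιMulti (d : Module.Dual R V) {n : ℕ} (v : Fin (n + 1) → V) :
    CliffordAlgebra.contractLeft d (ExteriorAlgebra.ιMulti R (n + 1) v) =
      ∑ j : Fin (n + 1), (-1 : R) ^ (j : ℕ) • d (v j) •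
        ExteriorAlgebra.ιMulti R n (fun i => v (j.succAbove i)) := by
  induction n with
  | zero =>
    rw [ExteriorAlgebra.ιMulti_succ_apply, contractLeft_ι_mul, ExteriorAlgebra.ιMulti_zero_apply,
      contractLeft_one]
    simp
  | succ n ih =>
    rw [ExteriorAlgebra.ιMulti_succ_apply, contractLeft_ι_mul, ih, Finset.mul_sum,
      sub_eq_add_neg, ← Finset.sum_neg_distrib]
    conv_rhs => rw [Fin.sum_univ_succ]
    congr 1
    · simp [Matrix.vecTail, Function.comp_def]
    · refine Finset.sum_congr rfl fun j _ => ?_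
      rw [ExteriorAlgebra.ιMulti_succ_apply (fun i => v (j.succ.succAbove i))]
      simp [Matrix.vecTail, Function.comp_def, pow_succ]

/-- The Pfaffian of the matrix `B vᵢ vⱼ` as an alternating function of the vectors `v₁, …, vₖ`
(zero for odd `k`). -/
noncomputable def pfaffianMap (k : ℕ) : V [⋀^Fin k]→ₗ[R] R :=
  (vacuum B hB).compAlternatingMap (ExteriorAlgebra.ιMulti R k)

theorem pfaffianMap_apply {k : ℕ} (v : Fin k → V) :
    pfaffianMap B hB k v = vacuum B hB (ExteriorAlgebra.ιMulti R k v) := rfl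

theorem pfaffianMap_zero (v : Fin 0 → V) : pfaffianMap B hB 0 v = 1 := by
  rw [pfaffianMap_apply, ExteriorAlgebra.ιMulti_zero_apply, vacuum_one]

theorem pfaffianMap_succ_succ {k : ℕ} (v : Fin (k + 2) → V) :
    pfaffianMap B hB (k + 2) v = ∑ j : Fin (k + 1), (-1 : R) ^ (j : ℕ) *
      (B (v 0) (v j.succ) * pfaffianMap B hB k fun i => v (j.succAbove i).succ) := by
  rw [pfaffianMap_apply, ExteriorAlgebra.ιMulti_succ_apply, vacuum_ι_mul, contractLeft_ιMulti,
    map_sum]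
  simp [pfaffianMap_apply, Matrix.vecTail]

theorem pfaffianMap_two (v : Fin 2 → V) : pfaffianMap B hB 2 v = B (v 0) (v 1) := by
  simp [pfaffianMap_succ_succ, pfaffianMap_zero]

theorem pfaffianMap_eq_pfaffian {m : ℕ} (v : Fin (2 * m) → V) :
    pfaffianMap B hB (2 * m) v = pfaffian (Matrix.of fun i j => B (v i) (v j)) := by
  induction m with
  | zero => rw [pfaffian_zero, pfaffianMap_zero]
  | succ m ih =>
    rw [pfaffian_succ]
    refine (pfaffianMap_succ_succ B hB (k := 2 * m) v).trans (Finset.sum_congr rfl fun j _ => ?_)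
    rw [ih]
    rfl

theorem ι_mul_ι_swap (x y : V) :
    ExteriorAlgebra.ι R x * ExteriorAlgebra.ι R y =
      -(ExteriorAlgebra.ι R y * ExteriorAlgebra.ι R x) :=
  eq_neg_of_add_eq_zero_left (ExteriorAlgebra.ι_add_mul_swap x y)

theorem commute_ιMulti_ι_mul_ι {k : ℕ} (v : Fin k → V) (x y : V) :
    Commute (ExteriorAlgebra.ιMulti R k v) (ExteriorAlgebra.ι R x * ExteriorAlgebra.ι R y) := by
  rw [ExteriorAlgebra.ιMulti_apply]
  refine Commute.list_prod_left _ _ fun a ha => ?_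
  obtain ⟨i, rfl⟩ := List.mem_ofFn.1 ha
  rw [commute_iff_eq, ← mul_assoc, ι_mul_ι_swap (v i) x, neg_mul, mul_assoc, ι_mul_ι_swap (v i) y,
    mul_neg, neg_neg, mul_assoc]

theorem ιMulti_snoc_snoc {k : ℕ} (v : Fin k → V) (x y : V) :
    ExteriorAlgebra.ιMulti R (k + 2)
        (Fin.snoc (Fin.snoc v x : Fin (k + 1) → V) y : Fin (k + 2) → V) =
      ExteriorAlgebra.ιMulti R k v * (ExteriorAlgebra.ι R x * ExteriorAlgebra.ι R y) := by
  simp only [ExteriorAlgebra.ιMulti_apply, List.ofFn_succ', List.concat_eq_append,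
    List.prod_append, List.prod_singleton, mul_assoc, Fin.snoc_castSucc, Fin.snoc_last]

theorem contractLeft_ιMulti_of_forall_eq_zero (d : Module.Dual R V) {k : ℕ} (v : Fin k → V)
    (h : ∀ i, d (v i) = 0) :
    CliffordAlgebra.contractLeft d (ExteriorAlgebra.ιMulti R k v) = 0 := by
  cases k with
  | zero => rw [ExteriorAlgebra.ιMulti_zero_apply, contractLeft_one]
  | succ k =>
    rw [contractLeft_ιMulti]
    exact Finset.sum_eq_zero fun j _ => by rw [h, zero_smul, smul_zero]

/-- A trailing pair `x, y` with `B x y = 1` whose members pair equally with all other vectors can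
be dropped: `x ∧ y = x ∧ (y - x)`, and `y - x` is orthogonal to everything but `x`. -/
theorem pfaffianMap_snoc_snoc {k : ℕ} (v : Fin k → V) (x y : V) (hxy : B x y = 1)
    (h : ∀ i, B (v i) x = B (v i) y) :
    pfaffianMap B hB (k + 2) (Fin.snoc (Fin.snoc v x : Fin (k + 1) → V) y : Fin (k + 2) → V) =
      pfaffianMap B hB k v := by
  have hcontr : CliffordAlgebra.contractLeft (B (y - x)) (ExteriorAlgebra.ιMulti R k v) = 0 :=
    contractLeft_ιMulti_of_forall_eq_zero _ v fun i => by
      rw [← hB.neg_eq (v i) (y - x), map_sub, sub_eq_zero.2 (h i).symm, neg_zero]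
  have hval : B (y - x) x = -1 := by
    rw [map_sub, LinearMap.sub_apply, hB.self_eq_zero, sub_zero, ← hB.neg_eq x y, hxy]
  have hpair : ExteriorAlgebra.ι R x * ExteriorAlgebra.ι R y =
      -(ExteriorAlgebra.ι R (y - x) * ExteriorAlgebra.ι R x) := by
    rw [← ι_mul_ι_swap, map_sub, mul_sub, ExteriorAlgebra.ι_sq_zero, sub_zero]
  rw [pfaffianMap_apply, ιMulti_snoc_snoc, (commute_ιMulti_ι_mul_ι v x y).eq, hpair, neg_mul,
    map_neg, mul_assoc, vacuum_ι_mul, contractLeft_ι_mul, hcontr, hval, mul_zero, sub_zero,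
    map_smul, neg_smul, one_smul, neg_neg, pfaffianMap_apply]

end PfaffianMap

section Alternating

variable {R V W ι : Type*} [CommRing R] [AddCommGroup V] [Module R V]
  [AddCommGroup W] [Module R W]

theorem map_update_eq_zero_of_mem_span [DecidableEq ι] (Φ : V [⋀^ι]→ₗ[R] W) (v : ι → V)
    {i : ι} {x : V} (hx : x ∈ Submodule.span R (v '' {i}ᶜ)) : Φ (Function.update v i x) = 0 := by
  have hle : Submodule.span R (v '' {i}ᶜ) ≤
      LinearMap.ker (Φ.toMultilinearMap.toLinearMap v i) := by
    rw [Submodule.span_le]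
    rintro _ ⟨j, hj, rfl⟩
    exact Φ.map_update_self v (Ne.symm hj)
  exact hle hx

theorem map_eq_of_forall_sub_mem_span [Finite ι] [LinearOrder ι] (Φ : V [⋀^ι]→ₗ[R] W)
    {u v : ι → V} (h : ∀ i, u i - v i ∈ Submodule.span R (v '' Set.Ioi i)) : Φ u = Φ v := by
  cases nonempty_fintype ι
  suffices hS : ∀ S : Finset ι, Φ (S.piecewise u v) = Φ v by
    rw [← hS Finset.univ, Finset.piecewise_univ]
  intro S
  induction S using Finset.induction_on_max with
  | empty => rw [Finset.piecewise_empty]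
  | insert a S hS ih =>
    set w := S.piecewise u v
    have hwv {i : ι} (hi : a ≤ i) : w i = v i :=
      Finset.piecewise_eq_of_notMem _ _ _ fun hiS => (hS i hiS).not_ge hi
    have hspan : u a - v a ∈ Submodule.span R (w '' {a}ᶜ) := by
      refine Submodule.span_mono ?_ (h a)
      rintro _ ⟨i, hi, rfl⟩
      exact ⟨i, ne_of_gt hi, hwv (le_of_lt hi)⟩
    calc Φ ((insert a S).piecewise u v)
        = Φ (Function.update w a (v a + (u a - v a))) := by
          rw [Finset.piecewise_insert, add_sub_cancel]
      _ = Φ (Function.update w a (w a)) := by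
          rw [Φ.map_update_add, map_update_eq_zero_of_mem_span Φ w hspan, add_zero, hwv le_rfl]
      _ = Φ v := by rw [Function.update_eq_self, ih]

theorem map_sum_smul [Fintype ι] [DecidableEq ι] {α : Type*} (Φ : V [⋀^ι]→ₗ[R] W)
    (A : ι → Finset α) (g : ι → α → R) (e : α → V) :
    Φ (fun i => ∑ b ∈ A i, g i b • e b) =
      ∑ t ∈ Fintype.piFinset A, (∏ i, g i (t i)) • Φ fun i => e (t i) :=
  (Φ.toMultilinearMap.map_sum_finset (fun i b => g i b • e b) A).trans
    (Finset.sum_congr rfl fun t _ => Φ.map_smul_univ (fun i => g i (t i)) _)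

end Alternating

section Tableaux

variable {α : Type*}

/-- Monotonicity of a filling of `C` along a neighbourhood relation `r`, strict at the letters `t`
with `strict t`. -/
def IsMonotoneAlong (r : α → α → Prop) (strict : ℕ → Prop) {C : Finset α} (f : C → ℕ) : Prop :=
  ∀ p q : C, r p q → f p ≤ f q ∧ (f p = f q → ¬strict (f p))

/-- The condition under which the boxes of `C` outside `D` may be filled with a single new largest
letter: it extends monotone fillings along `r`, and if `strict` holds then the new letter does not
occur twice along `r`. -/
def IsStripAlong (r : α → α → Prop) (strict : Prop) (C D : Finset α) : Prop :=
  ∀ p ∈ C, ∀ q ∈ C, r p q → q ∈ D ∨ strict → p ∈ D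

variable {C D : Finset α} {N : ℕ}

/-- The boxes of `C` filled with letters smaller than `N`. -/
noncomputable def boxesBelow (N : ℕ) (f : C → ℕ) : Finset α :=
  (Finset.univ.filter fun c => f c < N).map (Function.Embedding.subtype _)

theorem boxesBelow_subset (f : C → ℕ) : boxesBelow N f ⊆ C := by
  intro c hc
  obtain ⟨c, -, rfl⟩ := Finset.mem_map.1 hc
  exact c.2

theorem coe_mem_boxesBelow {f : C → ℕ} {c : C} : (c : α) ∈ boxesBelow N f ↔ f c < N := by
  simp [boxesBelow]

variable [DecidableEq α]

/-- The filling of `C` that agrees with `g` on `D` and takes the value `N` elsewhere. -/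
noncomputable def extendFilling (N : ℕ) (g : D → ℕ) (c : C) : ℕ :=
  if h : (c : α) ∈ D then g ⟨c, h⟩ else N

theorem extendFilling_of_mem (g : D → ℕ) {c : C} (h : (c : α) ∈ D) :
    extendFilling N g c = g ⟨c, h⟩ := dif_pos h

theorem extendFilling_of_notMem (g : D → ℕ) {c : C} (h : (c : α) ∉ D) :
    extendFilling N g c = N := dif_neg h

theorem extendFilling_coe (hD : D ⊆ C) (g : D → ℕ) (c : D) :
    extendFilling N g (⟨c, hD c.2⟩ : C) = g c := dif_pos c.2

theorem extendFilling_lt_iff {g : D → ℕ} (hg : ∀ c, g c < N) {c : C} :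
    extendFilling N g c < N ↔ (c : α) ∈ D := by
  by_cases h : (c : α) ∈ D
  · simp [extendFilling_of_mem g h, h, hg]
  · simp [extendFilling_of_notMem g h, h]

theorem extendFilling_le {g : D → ℕ} (hg : ∀ c, g c < N) (c : C) : extendFilling N g c ≤ N := by
  by_cases h : (c : α) ∈ D
  · exact ((extendFilling_lt_iff hg).2 h).le
  · exact (extendFilling_of_notMem g h).le

theorem isMonotoneAlong_extendFilling (hD : D ⊆ C) {g : D → ℕ} (hg : ∀ c, g c < N)
    (r : α → α → Prop) (strict : ℕ → Prop) :
    IsMonotoneAlong r strict (extendFilling N g : C → ℕ) ↔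
      IsStripAlong r (strict N) C D ∧ IsMonotoneAlong r strict g := by
  refine ⟨fun H => ⟨fun p hp q hq hpq => ?_, fun p q hpq => ?_⟩, fun ⟨hstrip, hmono⟩ p q hpq => ?_⟩
  · have hpq := H ⟨p, hp⟩ ⟨q, hq⟩ hpq
    by_contra! hcon
    rw [extendFilling_of_notMem g hcon.2] at hpq
    have hqD : q ∉ D := fun h => ((extendFilling_lt_iff hg).2 h).not_ge hpq.1
    exact hpq.2 (extendFilling_of_notMem g hqD).symm (hcon.1.resolve_left hqD)
  · have hpq := H ⟨p, hD p.2⟩ ⟨q, hD q.2⟩ hpq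
    rwa [extendFilling_coe hD, extendFilling_coe hD] at hpq
  · have hstrip := hstrip p p.2 q q.2 hpq
    by_cases hq : (q : α) ∈ D
    · have hp := hstrip (Or.inl hq)
      rw [extendFilling_of_mem g hp, extendFilling_of_mem g hq]
      exact hmono ⟨p, hp⟩ ⟨q, hq⟩ hpq
    · rw [extendFilling_of_notMem g hq]
      by_cases hp : (p : α) ∈ D
      · have hlt := (extendFilling_lt_iff (c := p) hg).2 hp
        exact ⟨hlt.le, fun h => absurd h hlt.ne⟩
      · rw [extendFilling_of_notMem g hp]
        exact ⟨le_rfl, fun _ hstrict => hp (hstrip (Or.inr hstrict))⟩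

theorem prod_extendFilling {R : Type*} [CommMonoid R] (w : ℕ → α → R)
    (hD : D ⊆ C) (g : D → ℕ) :
    ∏ c : C, w (extendFilling N g c) c = (∏ c ∈ C \ D, w N c) * ∏ c : D, w (g c) c := by
  have hC := Finset.prod_coe_sort C fun c => w (if h : c ∈ D then g ⟨c, h⟩ else N) c
  refine hC.trans ?_
  rw [← Finset.prod_sdiff hD, ← Finset.prod_coe_sort D]
  congr 1
  · exact Finset.prod_congr rfl fun c hc => by rw [dif_neg (Finset.mem_sdiff.1 hc).2]
  · exact Finset.prod_congr rfl fun c _ => by rw [dif_pos c.2]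

theorem boxesBelow_extendFilling (hD : D ⊆ C) {g : D → ℕ} (hg : ∀ c, g c < N) :
    boxesBelow N (extendFilling N g : C → ℕ) = D := by
  ext c
  by_cases hc : c ∈ C
  · exact (coe_mem_boxesBelow (c := ⟨c, hc⟩)).trans (extendFilling_lt_iff hg)
  · exact iff_of_false (fun h => hc (boxesBelow_subset _ h)) fun h => hc (hD h)

theorem extendFilling_restrict {f : C → ℕ} (hf : ∀ c, f c < N + 1) (hD : D ⊆ C)
    (h : boxesBelow N f = D) : extendFilling N (fun c : D => f ⟨c, hD c.2⟩) = f := by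
  funext c
  by_cases hc : (c : α) ∈ D
  · rw [extendFilling_of_mem _ hc]
  · rw [extendFilling_of_notMem _ hc]
    rw [← h, coe_mem_boxesBelow, not_lt] at hc
    exact hc.antisymm (Nat.lt_succ_iff.1 (hf c))

/-- `q` is the box to the right of `p`. -/
def IsRightNeighbor (p q : ℕ × ℕ) : Prop := q.1 = p.1 ∧ q.2 = p.2 + 1

/-- `q` is the box below `p`. -/
def IsLowerNeighbor (p q : ℕ × ℕ) : Prop := q.1 = p.1 + 1 ∧ q.2 = p.2

/-- The tableau conditions for the alphabet `ℕ` in which `prim t` says that the letter `t` is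
primed. -/
def IsTableau (prim : ℕ → Prop) {C : Finset (ℕ × ℕ)} (f : C → ℕ) : Prop :=
  IsMonotoneAlong IsRightNeighbor prim f ∧ IsMonotoneAlong IsLowerNeighbor (fun t => ¬prim t) f

/-- The condition under which the boxes of `C` outside `D` may be filled with a single new largest
letter, primed if `pr` holds. -/
def IsStrip (pr : Prop) (C D : Finset (ℕ × ℕ)) : Prop :=
  IsStripAlong IsRightNeighbor pr C D ∧ IsStripAlong IsLowerNeighbor (¬pr) C D

theorem isTableau_extendFilling {prim : ℕ → Prop} {C D : Finset (ℕ × ℕ)} (hD : D ⊆ C) {g : D → ℕ}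
    (hg : ∀ c, g c < N) :
    IsTableau prim (extendFilling N g : C → ℕ) ↔ IsStrip (prim N) C D ∧ IsTableau prim g := by
  rw [IsTableau, isMonotoneAlong_extendFilling hD hg, isMonotoneAlong_extendFilling hD hg,
    and_and_and_comm]
  rfl

/-- The tableaux on `C` with letters smaller than `N`. -/
noncomputable def tableaux (prim : ℕ → Prop) (N : ℕ) (C : Finset (ℕ × ℕ)) : Finset (C → ℕ) :=
  (Fintype.piFinset fun _ => Finset.range N).filter (IsTableau prim)

theorem mem_tableaux {prim : ℕ → Prop} {C : Finset (ℕ × ℕ)} {f : C → ℕ} :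
    f ∈ tableaux prim N C ↔ (∀ c, f c < N) ∧ IsTableau prim f := by
  simp [tableaux]

theorem isStrip_and_restrict_mem_tableaux {prim : ℕ → Prop} {C D : Finset (ℕ × ℕ)} {f : C → ℕ}
    (hf : f ∈ tableaux prim (N + 1) C) (hDC : D ⊆ C) (h : boxesBelow N f = D) :
    IsStrip (prim N) C D ∧ (fun c : D => f ⟨c, hDC c.2⟩) ∈ tableaux prim N D := by
  obtain ⟨hlt, htab⟩ := mem_tableaux.1 hf
  have hrestrict (c : D) : f ⟨c, hDC c.2⟩ < N := coe_mem_boxesBelow.1 (by rw [h]; exact c.2)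
  rw [← extendFilling_restrict hlt hDC h, isTableau_extendFilling hDC hrestrict] at htab
  exact ⟨htab.1, mem_tableaux.2 ⟨hrestrict, htab.2⟩⟩

variable {R : Type*} [CommSemiring R] (prim : ℕ → Prop) (z : ℕ → ℤ → R)

/-- The sum over the tableaux on `C` with letters smaller than `N`, where the letter `t` has weight
`z t c` in a box of content `c`. -/
noncomputable def tabSum (N : ℕ) (C : Finset (ℕ × ℕ)) : R :=
  ∑ f ∈ tableaux prim N C, ∏ c : C, z (f c) (content c)

theorem tabSum_empty (N : ℕ) : tabSum prim z N ∅ = 1 := by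
  have htab (f : (∅ : Finset (ℕ × ℕ)) → ℕ) : IsTableau prim f :=
    ⟨fun p => isEmptyElim p, fun p => isEmptyElim p⟩
  simp [tabSum, tableaux, htab]

theorem tabSum_zero {C : Finset (ℕ × ℕ)} (hC : C.Nonempty) : tabSum prim z 0 C = 0 := by
  have : Nonempty C := hC.to_subtype
  simp [tabSum, tableaux]

/-- Sort the tableaux by the set of boxes not occupied by the largest letter. -/
theorem tabSum_succ (N : ℕ) (C : Finset (ℕ × ℕ)) :
    tabSum prim z (N + 1) C = ∑ D ∈ C.powerset with IsStrip (prim N) C D,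
      (∏ c ∈ C \ D, z N (content c)) * tabSum prim z N D := by
  rw [tabSum, ← Finset.sum_fiberwise_of_maps_to (g := boxesBelow N)
    (t := C.powerset.filter fun D => IsStrip (prim N) C D)]
  · refine Finset.sum_congr rfl fun D hD => ?_
    obtain ⟨hDC, hstrip⟩ : D ⊆ C ∧ IsStrip (prim N) C D := by simpa using hD
    rw [tabSum, Finset.mul_sum]
    symm
    refine Finset.sum_nbij' (extendFilling N) (fun f c => f ⟨c, hDC c.2⟩) ?_ ?_ ?_ ?_ ?_
    · intro g hg
      obtain ⟨hlt, htab⟩ := mem_tableaux.1 hg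
      exact Finset.mem_filter.2 ⟨mem_tableaux.2
        ⟨fun c => Nat.lt_succ_of_le (extendFilling_le hlt c),
          (isTableau_extendFilling hDC hlt).2 ⟨hstrip, htab⟩⟩, boxesBelow_extendFilling hDC hlt⟩
    · intro f hf
      obtain ⟨hf, hfD⟩ := Finset.mem_filter.1 hf
      exact (isStrip_and_restrict_mem_tableaux hf hDC hfD).2
    · exact fun g _ => funext fun c => extendFilling_coe hDC g c
    · intro f hf
      obtain ⟨hf, hfD⟩ := Finset.mem_filter.1 hf
      exact extendFilling_restrict (mem_tableaux.1 hf).1 hDC hfD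
    · intro g _
      exact (prod_extendFilling (fun t c => z t (content c)) hDC g).symm
  · intro f hf
    have hstrip := (isStrip_and_restrict_mem_tableaux hf (boxesBelow_subset f) rfl).1
    simp [boxesBelow_subset f, hstrip]

end Tableaux

section ShiftedDiagrams

variable {k : ℕ} {s t : Fin k → ℕ} {pr : Prop}

/-- The shifted diagram whose row `i` has `s i - 1` boxes. The values `s i = 1` and `s i = 0` both
encode an empty row; the latter is the row appended to make the number of rows even. -/
def cells (s : Fin k → ℕ) : Finset (ℕ × ℕ) :=
  Finset.univ.biUnion fun i : Fin k =>
    (Finset.range (s i - 1)).image fun c => ((i : ℕ), (i : ℕ) + c)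

theorem mem_cells {q : ℕ × ℕ} :
    q ∈ cells s ↔ ∃ (i : Fin k) (c : ℕ), c + 1 < s i ∧ ((i : ℕ), (i : ℕ) + c) = q := by
  simp [cells, Nat.lt_sub_iff_add_lt]

theorem mk_mem_cells {i : Fin k} {c : ℕ} : ((i : ℕ), (i : ℕ) + c) ∈ cells s ↔ c + 1 < s i := by
  rw [mem_cells]
  refine ⟨?_, fun h => ⟨i, c, h, rfl⟩⟩
  rintro ⟨j, d, hd, h⟩
  obtain rfl : j = i := Fin.ext (congrArg Prod.fst h)
  obtain rfl : d = c := Nat.add_left_cancel (congrArg Prod.snd h)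
  exact hd

theorem cells_congr (h : ∀ i, s i - 1 = t i - 1) : cells s = cells t := by
  simp only [cells, h]

theorem cells_subset_cells (h : ∀ i, t i ≤ s i) : cells t ⊆ cells s := by
  intro q hq
  obtain ⟨i, c, hc, rfl⟩ := mem_cells.1 hq
  exact mk_mem_cells.2 (hc.trans_le (h i))

theorem cells_nonempty {i : Fin k} (hi : 1 < s i) : (cells s).Nonempty :=
  ⟨(i, i + 0), mk_mem_cells.2 (by omega)⟩

theorem cells_eq_empty (h : ∀ i, s i ≤ 1) : cells s = ∅ := by
  refine Finset.eq_empty_of_forall_notMem fun q hq => ?_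
  obtain ⟨i, c, hc, -⟩ := mem_cells.1 hq
  have := h i
  omega

theorem cells_snoc {x : ℕ} (hx : x ≤ 1) : cells (Fin.snoc s x : Fin (k + 1) → ℕ) = cells s := by
  have hlast (c : ℕ) : ¬c + 1 < x := by omega
  ext q
  simp [mem_cells, Fin.exists_fin_succ', hlast]

theorem prod_cells_sdiff {R : Type*} [CommMonoid R] (w : ℤ → R) :
    ∏ c ∈ cells s \ cells t, w (content c) =
      ∏ i, ∏ c ∈ Finset.Ico (t i - 1) (s i - 1), w c := by
  rw [Finset.prod_sigma']
  symm
  refine Finset.prod_bij (fun a _ => ((a.1 : ℕ), (a.1 : ℕ) + a.2)) ?_ ?_ ?_ ?_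
  · rintro ⟨i, c⟩ h
    simp only [Finset.mem_sigma, Finset.mem_univ, true_and, Finset.mem_Ico] at h
    simp only [Finset.mem_sdiff, mk_mem_cells]
    omega
  · rintro ⟨i, c⟩ _ ⟨j, d⟩ _ h
    obtain rfl : i = j := Fin.ext (congrArg Prod.fst h)
    obtain rfl : c = d := Nat.add_left_cancel (congrArg Prod.snd h)
    rfl
  · intro q hq
    rw [Finset.mem_sdiff] at hq
    obtain ⟨i, c, hc, rfl⟩ := mem_cells.1 hq.1
    rw [mk_mem_cells, mk_mem_cells] at hq
    refine ⟨⟨i, c⟩, ?_, rfl⟩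
    simp only [Finset.mem_sigma, Finset.mem_univ, true_and, Finset.mem_Ico]
    omega
  · rintro ⟨i, c⟩ _
    simp [content]

/-- The row-length form of `IsStrip` for shifted diagrams: `t` is obtained from `s` by shortening
the rows by a strip that may be filled with a single letter, primed if `pr` holds. -/
structure Interlaces (pr : Prop) (s t : Fin k → ℕ) : Prop where
  le (i : Fin k) : t i ≤ s i
  eq_zero_iff (i : Fin k) : t i = 0 ↔ s i = 0
  strictAnti : StrictAnti t
  le_add_one (hpr : pr) (i : Fin k) : s i ≤ t i + 1
  lt (hpr : ¬pr) {i j : Fin k} (hij : i < j) : s j < t i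

theorem Interlaces.isStrip (h : Interlaces pr s t) : IsStrip pr (cells s) (cells t) := by
  constructor
  · rintro q hq q' hq' ⟨h₁, h₂⟩ hor
    obtain ⟨i, c, hc, rfl⟩ := mem_cells.1 hq
    obtain ⟨j, d, hd, rfl⟩ := mem_cells.1 hq'
    obtain rfl : j = i := Fin.ext h₁
    obtain rfl : d = c + 1 := by simp only at h₂; omega
    rw [mk_mem_cells] at hor ⊢
    rcases hor with hmem | hpr
    · omega
    · have := h.le_add_one hpr j
      omega
  · rintro q hq q' hq' ⟨h₁, h₂⟩ hor
    obtain ⟨i, c, hc, rfl⟩ := mem_cells.1 hq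
    obtain ⟨j, d, hd, rfl⟩ := mem_cells.1 hq'
    have hij : i < j := Fin.lt_def.2 (by simp only at h₁; omega)
    obtain rfl : c = d + 1 := by simp only at h₁ h₂; omega
    rw [mk_mem_cells] at hor ⊢
    rcases hor with hmem | hpr
    · have := h.strictAnti hij
      omega
    · have := h.lt hpr hij
      omega

theorem le_add_one_of_isStripAlong (h : IsStripAlong IsRightNeighbor pr (cells s) (cells t))
    (hzero : ∀ i, t i = 0 ↔ s i = 0) (hpr : pr) (i : Fin k) : s i ≤ t i + 1 := by
  by_contra! hlt
  have hpos : t i ≠ 0 := fun h0 => by have := (hzero i).1 h0; omega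
  have hmem := h (i, i + (t i - 1)) (mk_mem_cells.2 (by omega)) (i, i + (t i - 1 + 1))
    (mk_mem_cells.2 (by omega)) ⟨rfl, rfl⟩ (Or.inr hpr)
  rw [mk_mem_cells] at hmem
  omega

theorem lt_of_isStripAlong {strict : Prop}
    (h : IsStripAlong IsLowerNeighbor strict (cells s) (cells t))
    (hs : StrictAnti s) {i j : Fin k} (hij : (j : ℕ) = i + 1) {c : ℕ} (hc : c + 1 < s j)
    (hor : c + 1 < t j ∨ strict) : c + 2 < t i := by
  have hlt : s j < s i := hs (Fin.lt_def.2 (by omega))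
  have hmem := h (i, i + (c + 1)) (mk_mem_cells.2 (by omega)) (j, j + c) (mk_mem_cells.2 hc)
    ⟨hij, by simp only; omega⟩
  rw [mk_mem_cells, mk_mem_cells] at hmem
  exact hmem hor

theorem interlaces_of_isStrip (hs : StrictAnti s) (hone : ∀ i, s i ≠ 1) (hle : ∀ i, t i ≤ s i)
    (hzero : ∀ i, t i = 0 ↔ s i = 0) (h : IsStrip pr (cells s) (cells t)) :
    Interlaces pr s t := by
  have hvert := le_add_one_of_isStripAlong h.1 hzero
  have hpos {i j : Fin k} (hij : i < j) : t i ≠ 0 := fun h0 => by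
    have := hs hij
    have := (hzero i).1 h0
    omega
  have hhoriz (hpr : ¬pr) {i j : Fin k} (hij : i < j) : s j < t i := by
    have hpos := hpos hij
    have hj := hs.antitone (show (⟨i + 1, by omega⟩ : Fin k) ≤ j from hij)
    have hone := hone j
    have hlt := lt_of_isStripAlong (j := ⟨i + 1, by omega⟩) (c := s ⟨i + 1, by omega⟩ - 2)
      h.2 hs rfl
    by_contra! hcon
    have := hlt (by omega) (Or.inr hpr)
    omega
  refine ⟨hle, hzero, fun i j hij => ?_, hvert, hhoriz⟩
  by_cases hpr : pr
  · have hvert := hvert hpr i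
    have hij' := hs hij
    have hle := hle j
    have hpos := hpos hij
    by_contra! hcon
    rcases (Nat.succ_le_of_lt (Fin.lt_def.1 hij)).eq_or_lt with hadj | hfar
    · have hone := hone j
      have := lt_of_isStripAlong (c := t j - 2) h.2 hs hadj.symm (by omega) (Or.inl (by omega))
      omega
    · have h₁ := hs (show i < ⟨i + 1, by omega⟩ from Nat.lt_succ_self _)
      have h₂ := hs (show ⟨i + 1, by omega⟩ < j from hfar)
      omega
  · exact (hle j).trans_lt (hhoriz hpr hij)

theorem exists_lt_iff {P : ℕ → Prop} (n : ℕ) (hP : ∀ c, P (c + 1) → P c)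
    (hn : ∀ c, P c → c + 1 < n) : ∃ m ≤ n, (m = 0 ↔ n = 0) ∧ ∀ c, P c ↔ c + 1 < m := by
  obtain _ | n := n
  · exact ⟨0, le_rfl, Iff.rfl, fun c => ⟨fun h => hn c h, fun h => absurd h (Nat.not_lt_zero _)⟩⟩
  have hex : ∃ c, ¬P c := ⟨n, fun h => absurd (hn n h) (lt_irrefl _)⟩
  refine ⟨Nat.find hex + 1, Nat.succ_le_succ (Nat.find_min' hex fun h => absurd (hn n h)
    (lt_irrefl _)), by simp, fun c => ?_⟩
  rw [Nat.succ_lt_succ_iff, Nat.lt_find_iff]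
  simp only [not_not]
  exact ⟨fun h m hm => Nat.decreasingInduction (fun _ _ => hP _) h hm, fun h => h c le_rfl⟩

theorem exists_cells_eq {D : Finset (ℕ × ℕ)} {strict : Prop} (hD : D ⊆ cells s)
    (h : IsStripAlong IsRightNeighbor strict (cells s) D) :
    ∃ t : Fin k → ℕ, (∀ i, t i ≤ s i) ∧ (∀ i, t i = 0 ↔ s i = 0) ∧ cells t = D := by
  have hlt (i : Fin k) (c : ℕ) (hc : ((i : ℕ), (i : ℕ) + c) ∈ D) : c + 1 < s i :=
    mk_mem_cells.1 (hD hc)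
  have hleft (i : Fin k) (c : ℕ) (hc : ((i : ℕ), (i : ℕ) + (c + 1)) ∈ D) :
      ((i : ℕ), (i : ℕ) + c) ∈ D :=
    h _ (mk_mem_cells.2 (Nat.lt_of_succ_lt (hlt i _ hc))) _ (hD hc) ⟨rfl, rfl⟩ (Or.inl hc)
  choose t hle hzero ht using fun i => exists_lt_iff (s i) (hleft i) (hlt i)
  refine ⟨t, hle, hzero, Finset.Subset.antisymm (fun q hq => ?_) fun q hq => ?_⟩
  · obtain ⟨i, c, hc, rfl⟩ := mem_cells.1 hq
    exact (ht i c).2 hc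
  · obtain ⟨i, c, -, rfl⟩ := mem_cells.1 (hD hq)
    exact mk_mem_cells.2 ((ht i c).1 hq)

theorem eq_of_cells_eq {t' : Fin k → ℕ} (hzero : ∀ i, t i = 0 ↔ t' i = 0)
    (h : cells t = cells t') : t = t' := by
  have hlt (i : Fin k) (c : ℕ) : c + 1 < t i ↔ c + 1 < t' i := by
    rw [← mk_mem_cells, h, mk_mem_cells]
  funext i
  have h₀ := hzero i
  have h₁ := hlt i (t i - 1)
  have h₂ := hlt i (t' i - 1)
  omega

/-- The finite set of row-length sequences left after removing the largest letter from a tableau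
with row lengths `s`. -/
noncomputable def interlacing (pr : Prop) (s : Fin k → ℕ) : Finset (Fin k → ℕ) :=
  (Fintype.piFinset fun i => Finset.range (s i + 1)).filter (Interlaces pr s)

theorem mem_interlacing : t ∈ interlacing pr s ↔ Interlaces pr s t := by
  simp only [interlacing, Finset.mem_filter, Fintype.mem_piFinset, Finset.mem_range_succ_iff]
  exact and_iff_right_of_imp Interlaces.le

theorem tabSum_succ_cells {R : Type*} [CommSemiring R] (prim : ℕ → Prop) (z : ℕ → ℤ → R) (N : ℕ)
    (hs : StrictAnti s) (hone : ∀ i, s i ≠ 1) :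
    tabSum prim z (N + 1) (cells s) = ∑ t ∈ interlacing (prim N) s,
      (∏ i, ∏ c ∈ Finset.Ico (t i - 1) (s i - 1), z N c) * tabSum prim z N (cells t) := by
  rw [tabSum_succ]
  symm
  refine Finset.sum_bij (fun t _ => cells t) (fun t ht => ?_) (fun t ht t' ht' => ?_)
    (fun D hD => ?_) fun t _ => by rw [prod_cells_sdiff]
  · have ht := mem_interlacing.1 ht
    simpa using ⟨cells_subset_cells ht.le, ht.isStrip⟩
  · exact eq_of_cells_eq fun i => ((mem_interlacing.1 ht).eq_zero_iff i).trans
      ((mem_interlacing.1 ht').eq_zero_iff i).symm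
  · obtain ⟨hsub, hstrip⟩ : D ⊆ cells s ∧ IsStrip (prim N) (cells s) D := by simpa using hD
    obtain ⟨t, hle, hzero, rfl⟩ := exists_cells_eq hsub hstrip.1
    exact ⟨t, mem_interlacing.2 (interlaces_of_isStrip hs hone hle hzero hstrip), rfl⟩

end ShiftedDiagrams

section RowRemoval

variable {R W : Type*} [CommRing R] [AddCommGroup W] [Module R W]

/-- The possible lengths (plus one, or zero for a row absent from the diagram, as in `cells`) of a
row of length `a - 1` after removing the boxes filled with its largest letter. -/
noncomputable def shortenings (pr : Prop) (a : ℕ) : Finset ℕ :=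
  (Finset.range (a + 1)).filter fun b => (b = 0 ↔ a = 0) ∧ (pr → a ≤ b + 1)

theorem mem_shortenings {pr : Prop} {a b : ℕ} :
    b ∈ shortenings pr a ↔ b ≤ a ∧ (b = 0 ↔ a = 0) ∧ (pr → a ≤ b + 1) := by
  rw [shortenings, Finset.mem_filter, Finset.mem_range_succ_iff]

/-- Removal of the largest letter, of weight `w c` in a box of content `c` and primed if `pr`
holds, from a single row starting at content zero, as a linear operator on row lengths. -/
noncomputable def rowRemoval (pr : Prop) (w : ℤ → R) : (ℕ →₀ R) →ₗ[R] (ℕ →₀ R) :=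
  Finsupp.linearCombination R fun a =>
    ∑ b ∈ shortenings pr a, (∏ c ∈ Finset.Ico (b - 1) (a - 1), w c) • Finsupp.single b 1

variable {pr : Prop} (w : ℤ → R)

theorem rowRemoval_single (a : ℕ) :
    rowRemoval pr w (Finsupp.single a 1) =
      ∑ b ∈ shortenings pr a, (∏ c ∈ Finset.Ico (b - 1) (a - 1), w c) • Finsupp.single b 1 := by
  rw [rowRemoval, Finsupp.linearCombination_single, one_smul]

theorem sum_shortenings_le (hpr : ¬pr) {a m : ℕ} (hm : m ≠ 0) (hma : m ≤ a) :
    ∑ b ∈ shortenings pr a with b ≤ m,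
        (∏ c ∈ Finset.Ico (b - 1) (a - 1), w c) • (Finsupp.single b 1 : ℕ →₀ R) =
      (∏ c ∈ Finset.Ico (m - 1) (a - 1), w c) • rowRemoval pr w (Finsupp.single m 1) := by
  have hA : (shortenings pr a).filter (· ≤ m) = shortenings pr m := by
    ext b
    simp only [Finset.mem_filter, mem_shortenings, hpr, false_implies, and_true]
    omega
  rw [rowRemoval_single, Finset.smul_sum, hA]
  refine Finset.sum_congr rfl fun b hb => ?_
  have hb := (mem_shortenings.1 hb).1
  rw [smul_smul, mul_comm, Finset.prod_Ico_consecutive (fun c : ℕ => w c) (by omega) (by omega)]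

variable {k : ℕ} {s : Fin k → ℕ}

theorem map_rowRemoval_of_primed (hpr : pr) (hs : StrictAnti s) (Φ : (ℕ →₀ R) [⋀^Fin k]→ₗ[R] W) :
    Φ (fun i => rowRemoval pr w (Finsupp.single (s i) 1)) = ∑ t ∈ interlacing pr s,
      (∏ i, ∏ c ∈ Finset.Ico (t i - 1) (s i - 1), w c) • Φ fun i => Finsupp.single (t i) 1 := by
  simp only [rowRemoval_single]
  rw [map_sum_smul]
  symm
  refine Finset.sum_subset (fun t ht => ?_) fun t ht ht' => ?_
  · have ht := mem_interlacing.1 ht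
    exact Fintype.mem_piFinset.2 fun i =>
      mem_shortenings.2 ⟨ht.le i, ht.eq_zero_iff i, fun hpr => ht.le_add_one hpr i⟩
  · simp only [Fintype.mem_piFinset, mem_shortenings] at ht
    have hnot : ¬StrictAnti t := fun hanti => ht' <| mem_interlacing.2
      ⟨fun i => (ht i).1, fun i => (ht i).2.1, hanti, fun _ i => (ht i).2.2 hpr, absurd hpr⟩
    obtain ⟨i, j, hij, hle⟩ : ∃ i j, i < j ∧ t i ≤ t j := by simpa [StrictAnti] using hnot
    have heq : t i = t j := by
      have := hs hij
      have := (ht i).2.2 hpr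
      have := (ht j).1
      omega
    rw [Φ.map_eq_zero_of_eq _ (by simp only [heq]) hij.ne, smul_zero]

/-- The terms with `b ≤ s (i + 1)` in the image of row `i` add up to a multiple of the image of
row `i + 1`. -/
theorem sum_shortenings_sub_mem_span (hpr : ¬pr) (hs : StrictAnti s) (i : Fin k) :
    (∑ b ∈ shortenings pr (s i) with ∀ j, i < j → s j < b,
        (∏ c ∈ Finset.Ico (b - 1) (s i - 1), w c) • Finsupp.single b 1) -
      rowRemoval pr w (Finsupp.single (s i) 1) ∈
    Submodule.span R ((fun j => rowRemoval pr w (Finsupp.single (s j) 1)) '' Set.Ioi i) := by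
  rw [rowRemoval_single, ← neg_mem_iff, neg_sub, sub_eq_iff_eq_add'.2
    (Finset.sum_filter_add_sum_filter_not _ (fun b => ∀ j, i < j → s j < b) _).symm]
  by_cases hex : ∃ j, i < j ∧ s j ≠ 0
  · obtain ⟨j, hij, hj⟩ := hex
    have hi : i < ⟨i + 1, by omega⟩ := Nat.lt_succ_self _
    have hmax {j : Fin k} (hij : i < j) : s j ≤ s ⟨i + 1, by omega⟩ := hs.antitone hij
    have hcond (b : ℕ) : (¬∀ j, i < j → s j < b) ↔ b ≤ s ⟨i + 1, by omega⟩ := by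
      push Not
      exact ⟨fun ⟨j, hij, hb⟩ => hb.trans (hmax hij), fun hb => ⟨_, hi, hb⟩⟩
    simp only [hcond]
    rw [sum_shortenings_le w hpr (fun h => hj (by have := hmax hij; omega)) (hs hi).le]
    exact Submodule.smul_mem _ _ (Submodule.subset_span ⟨_, hi, rfl⟩)
  · push Not at hex
    rw [Finset.sum_eq_zero]
    · exact zero_mem _
    · intro b hb
      simp only [Finset.mem_filter, mem_shortenings, not_forall, not_lt] at hb
      obtain ⟨⟨-, hzero, -⟩, j, hij, hbj⟩ := hb
      have := hs hij
      have := hex j hij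
      omega

theorem map_rowRemoval_of_not_primed (hpr : ¬pr) (hs : StrictAnti s)
    (Φ : (ℕ →₀ R) [⋀^Fin k]→ₗ[R] W) :
    Φ (fun i => rowRemoval pr w (Finsupp.single (s i) 1)) = ∑ t ∈ interlacing pr s,
      (∏ i, ∏ c ∈ Finset.Ico (t i - 1) (s i - 1), w c) • Φ fun i => Finsupp.single (t i) 1 := by
  have hA : interlacing pr s =
      Fintype.piFinset fun i => (shortenings pr (s i)).filter fun b => ∀ j, i < j → s j < b := by
    ext t
    simp only [mem_interlacing, Fintype.mem_piFinset, Finset.mem_filter, mem_shortenings]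
    exact ⟨fun h i => ⟨⟨h.le i, h.eq_zero_iff i, fun hpr' => absurd hpr' hpr⟩,
        fun j hij => h.lt hpr hij⟩,
      fun h => ⟨fun i => (h i).1.1, fun i => (h i).1.2.1,
        fun i j hij => (h j).1.1.trans_lt ((h i).2 j hij), fun hpr' => absurd hpr' hpr,
        fun _ i j hij => (h i).2 j hij⟩⟩
  rw [hA, ← map_eq_of_forall_sub_mem_span Φ (sum_shortenings_sub_mem_span w hpr hs)]
  exact map_sum_smul Φ _ (fun i b => ∏ c ∈ Finset.Ico (b - 1) (s i - 1), w c)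
    fun b => Finsupp.single b 1

theorem map_rowRemoval (hs : StrictAnti s) (Φ : (ℕ →₀ R) [⋀^Fin k]→ₗ[R] W) :
    Φ (fun i => rowRemoval pr w (Finsupp.single (s i) 1)) = ∑ t ∈ interlacing pr s,
      (∏ i, ∏ c ∈ Finset.Ico (t i - 1) (s i - 1), w c) • Φ fun i => Finsupp.single (t i) 1 := by
  by_cases hpr : pr
  · exact map_rowRemoval_of_primed w hpr hs Φ
  · exact map_rowRemoval_of_not_primed w hpr hs Φ

end RowRemoval

section RowPfaffian

variable {R : Type*} [CommRing R]

/-- The alternating form on `ℕ →₀ R` that takes the value `q a b` at the basis vectors `a > b`. -/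
noncomputable def altForm (q : ℕ → ℕ → R) : LinearMap.BilinForm R (ℕ →₀ R) :=
  let M : LinearMap.BilinForm R (ℕ →₀ R) := Finsupp.linearCombination R fun a =>
    Finsupp.linearCombination R fun b => if b < a then q a b else 0
  M - M.flip

theorem altForm_single {q : ℕ → ℕ → R} {a b : ℕ} (hba : b < a) :
    altForm q (Finsupp.single a 1) (Finsupp.single b 1) = q a b := by
  simp [altForm, hba, hba.not_gt]

theorem isAlt_altForm (q : ℕ → ℕ → R) : (altForm q).IsAlt := fun v => by
  simp [altForm]

variable (prim : ℕ → Prop) (z : ℕ → ℤ → R) (N : ℕ)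

/-- The alternating form on row lengths (encoded as in `cells`) given by the tableau sums of two-row
shapes. -/
noncomputable def twoRowForm : LinearMap.BilinForm R (ℕ →₀ R) :=
  altForm fun a b => tabSum prim z N (cells ![a, b])

theorem isAlt_twoRowForm : (twoRowForm prim z N).IsAlt := isAlt_altForm _

theorem twoRowForm_single {a b : ℕ} (hba : b < a) :
    twoRowForm prim z N (Finsupp.single a 1) (Finsupp.single b 1) =
      tabSum prim z N (cells ![a, b]) :=
  altForm_single hba

theorem twoRowForm_single_one {a : ℕ} (ha : 1 < a) :
    twoRowForm prim z N (Finsupp.single a 1) (Finsupp.single 1 1) =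
      twoRowForm prim z N (Finsupp.single a 1) (Finsupp.single 0 1) := by
  rw [twoRowForm_single prim z N ha, twoRowForm_single prim z N (by omega)]
  exact congrArg _ (cells_congr (Fin.forall_fin_two.2 ⟨rfl, rfl⟩))

theorem twoRowForm_one_zero :
    twoRowForm prim z N (Finsupp.single 1 1) (Finsupp.single 0 1) = 1 := by
  rw [twoRowForm_single prim z N one_pos, cells_eq_empty, tabSum_empty]
  exact Fin.forall_fin_two.2 ⟨le_rfl, zero_le_one⟩

theorem twoRowForm_rowRemoval {a b : ℕ} (hba : b < a) (ha : a ≠ 1) (hb : b ≠ 1) :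
    twoRowForm prim z N (rowRemoval (prim N) (z N) (Finsupp.single a 1))
        (rowRemoval (prim N) (z N) (Finsupp.single b 1)) =
      twoRowForm prim z (N + 1) (Finsupp.single a 1) (Finsupp.single b 1) := by
  have hs : StrictAnti ![a, b] := by
    rw [Fin.strictAnti_iff_succ_lt]
    simpa using hba
  have hremove := map_rowRemoval (pr := prim N) (z N) hs
    (pfaffianMap (twoRowForm prim z N) (isAlt_twoRowForm prim z N) 2)
  simp only [pfaffianMap_two] at hremove
  rw [twoRowForm_single prim z _ hba, tabSum_succ_cells prim z N hs (Fin.forall_fin_two.2 ⟨ha, hb⟩)]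
  refine hremove.trans (Finset.sum_congr rfl fun t ht => ?_)
  rw [twoRowForm_single prim z N ((mem_interlacing.1 ht).strictAnti Fin.zero_lt_one), smul_eq_mul,
    cells_congr (s := ![t 0, t 1]) (t := t) (Fin.forall_fin_two.2 ⟨rfl, rfl⟩)]

/-- The Pfaffian of the tableau sums of the two-row shapes made of rows of `s`. -/
noncomputable def rowPfaffian {k : ℕ} (s : Fin k → ℕ) : R :=
  pfaffianMap (twoRowForm prim z N) (isAlt_twoRowForm prim z N) k fun i => Finsupp.single (s i) 1

variable {m : ℕ} {s : Fin (2 * m) → ℕ}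

theorem rowPfaffian_eq_pfaffian {A : Matrix (Fin (2 * m)) (Fin (2 * m)) R}
    (h : ∀ i j, i < j →
      twoRowForm prim z N (Finsupp.single (s i) 1) (Finsupp.single (s j) 1) = A i j) :
    rowPfaffian prim z N s = pfaffian A := by
  rw [rowPfaffian, pfaffianMap_eq_pfaffian]
  exact pfaffian_congr h

theorem rowPfaffian_succ (hs : StrictAnti s) (hone : ∀ i, s i ≠ 1) :
    rowPfaffian prim z (N + 1) s = ∑ t ∈ interlacing (prim N) s,
      (∏ i, ∏ c ∈ Finset.Ico (t i - 1) (s i - 1), z N c) * rowPfaffian prim z N t := by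
  rw [rowPfaffian_eq_pfaffian prim z (N + 1) fun i j hij =>
    (twoRowForm_rowRemoval prim z N (hs hij) (hone i) (hone j)).symm]
  exact (pfaffianMap_eq_pfaffian _ (isAlt_twoRowForm prim z N) _).symm.trans
    (map_rowRemoval (z N) hs _)

theorem rowPfaffian_zero {k : ℕ} {s : Fin (k + 2) → ℕ} (hs : StrictAnti s) (h0 : 1 < s 0) :
    rowPfaffian prim z 0 s = 0 := by
  have hzero (j : Fin (k + 1)) :
      twoRowForm prim z 0 (Finsupp.single (s 0) 1) (Finsupp.single (s j.succ) 1) = 0 := by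
    rw [twoRowForm_single prim z 0 (hs j.succ_pos)]
    exact tabSum_zero prim z (cells_nonempty (i := 0) h0)
  rw [rowPfaffian, pfaffianMap_succ_succ]
  simp only [hzero, zero_mul, mul_zero, Finset.sum_const_zero]

theorem tabSum_zero_cells_eq_rowPfaffian (hs : StrictAnti s) (hone : ∀ i, s i ≠ 1) :
    tabSum prim z 0 (cells s) = rowPfaffian prim z 0 s := by
  cases m with
  | zero => rw [cells_eq_empty fun i => i.elim0, tabSum_empty, rowPfaffian, pfaffianMap_zero]
  | succ m =>
    have h0 : 1 < s (0 : Fin (2 * m + 2)) := by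
      have := hs (Fin.zero_lt_one (n := 2 * m))
      have := hone (0 : Fin (2 * m + 2))
      omega
    rw [tabSum_zero prim z (cells_nonempty h0)]
    exact (rowPfaffian_zero prim z (k := 2 * m) hs h0).symm

theorem rowPfaffian_snoc_one {u : Fin (2 * m + 1) → ℕ} (h : ∀ i, 1 < u i) :
    rowPfaffian prim z N (Fin.snoc u 1 : Fin (2 * m + 2) → ℕ) =
      rowPfaffian prim z N (Fin.snoc u 0 : Fin (2 * m + 2) → ℕ) := by
  refine (rowPfaffian_eq_pfaffian prim z N (m := m + 1) fun i j hij => ?_).trans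
    (pfaffianMap_eq_pfaffian _ _ _).symm
  change Fin (2 * m + 1 + 1) at i j
  obtain ⟨i, rfl⟩ := Fin.exists_castSucc_eq.2 (Fin.ne_last_of_lt hij)
  cases j using Fin.lastCases with
  | last =>
    simp only [Fin.snoc_castSucc, Fin.snoc_last, Matrix.of_apply,
      twoRowForm_single_one prim z N (h i)]
  | cast j => simp only [Fin.snoc_castSucc, Matrix.of_apply]

theorem rowPfaffian_snoc_one_zero {k : ℕ} {v : Fin k → ℕ} (h : ∀ i, 1 < v i) :
    rowPfaffian prim z N (Fin.snoc (Fin.snoc v 1 : Fin (k + 1) → ℕ) 0 : Fin (k + 2) → ℕ) =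
      rowPfaffian prim z N v := by
  rw [rowPfaffian, rowPfaffian, ← pfaffianMap_snoc_snoc _ _ _ _ _ (twoRowForm_one_zero prim z N)
    fun i => twoRowForm_single_one prim z N (h i)]
  congr 1
  funext i
  cases i using Fin.lastCases with
  | last => simp only [Fin.snoc_last]
  | cast i =>
    cases i using Fin.lastCases with
    | last => simp only [Fin.snoc_castSucc, Fin.snoc_last]
    | cast i => simp only [Fin.snoc_castSucc]

theorem strictAnti_snoc {α : Type*} [Preorder α] {k : ℕ} {v : Fin k → α} {x : α} :
    StrictAnti (Fin.snoc v x : Fin (k + 1) → α) ↔ StrictAnti v ∧ ∀ i, x < v i := by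
  refine ⟨fun h => ⟨fun i j hij => ?_, fun i => ?_⟩, fun ⟨hv, hx⟩ i j hij => ?_⟩
  · simpa using h (Fin.castSucc_lt_castSucc_iff.2 hij)
  · simpa using h (Fin.castSucc_lt_last i)
  · obtain ⟨i, rfl⟩ := Fin.exists_castSucc_eq.2 (Fin.ne_last_of_lt hij)
    cases j using Fin.lastCases with
    | last => simpa using hx i
    | cast j => simpa using hv (Fin.castSucc_lt_castSucc_iff.1 hij)

/-- A row `1` may be replaced by a row `0`, or dropped together with a row `0`. -/
theorem tabSum_cells_eq_rowPfaffian_of_forall_ne_one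
    (H : ∀ {m : ℕ} {s : Fin (2 * m) → ℕ}, StrictAnti s → (∀ i, s i ≠ 1) →
      tabSum prim z N (cells s) = rowPfaffian prim z N s) (hs : StrictAnti s) :
    tabSum prim z N (cells s) = rowPfaffian prim z N s := by
  obtain _ | m := m
  · exact H hs fun i => i.elim0
  change Fin (2 * m + 1 + 1) → ℕ at s
  obtain ⟨u, y, rfl⟩ : ∃ u y, s = Fin.snoc u y := ⟨_, _, (Fin.snoc_init_self s).symm⟩
  obtain ⟨v, x, rfl⟩ : ∃ v x, u = Fin.snoc v x := ⟨_, _, (Fin.snoc_init_self u).symm⟩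
  obtain ⟨hu, hy⟩ := strictAnti_snoc.1 hs
  obtain ⟨hv, hx⟩ := strictAnti_snoc.1 hu
  have hyx : y < x := by simpa using hy (Fin.last _)
  have hv1 (i : Fin (2 * m)) : 1 < v i := by
    have := hx i
    omega
  rcases eq_or_ne y 1 with rfl | hy1
  · rw [cells_snoc le_rfl, ← cells_snoc zero_le_one, rowPfaffian_snoc_one prim z N hy]
    exact H (m := m + 1) (strictAnti_snoc.2 ⟨hu, fun i => zero_lt_one.trans (hy i)⟩)
      (Fin.forall_fin_succ'.2 ⟨fun i => by simpa using (hy i).ne', by simp⟩)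
  rcases eq_or_ne x 1 with rfl | hx1
  · obtain rfl : y = 0 := by omega
    rw [cells_snoc zero_le_one, cells_snoc le_rfl, rowPfaffian_snoc_one_zero prim z N hv1]
    exact H hv fun i => (hv1 i).ne'
  · exact H (m := m + 1) hs (Fin.forall_fin_succ'.2
      ⟨Fin.forall_fin_succ'.2 ⟨fun i => by simpa using (hv1 i).ne', by simpa using hx1⟩,
        by simpa using hy1⟩)

theorem tabSum_cells_eq_rowPfaffian (hs : StrictAnti s) :
    tabSum prim z N (cells s) = rowPfaffian prim z N s := by
  induction N generalizing m with
  | zero =>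
    exact tabSum_cells_eq_rowPfaffian_of_forall_ne_one prim z 0
      (tabSum_zero_cells_eq_rowPfaffian prim z) hs
  | succ N ih =>
    refine tabSum_cells_eq_rowPfaffian_of_forall_ne_one prim z (N + 1) (fun hs hone => ?_) hs
    rw [tabSum_succ_cells prim z N hs hone, rowPfaffian_succ prim z N hs hone]
    exact Finset.sum_congr rfl fun t ht => by rw [ih (mem_interlacing.1 ht).strictAnti]

end RowPfaffian

section PrimedAlphabet

variable {n : ℕ}

theorem even_ordE {e : Fin n × Bool} : Even (ordE e) ↔ e.2 = true := by
  unfold ordE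
  split_ifs with h
  · simp [h]
  · simp [h, parity_simps]

theorem ordE_lt (e : Fin n × Bool) : ordE e < 2 * n := by
  have := e.1.isLt
  unfold ordE
  split_ifs <;> omega

theorem ordE_injective : Function.Injective (ordE (n := n)) := fun e e' h => by
  have h2 : e.2 = e'.2 := by rw [Bool.eq_iff_iff, ← even_ordE, h, even_ordE]
  have h1 : (e.1 : ℕ) = e'.1 := by
    unfold ordE at h
    rw [h2] at h
    omega
  exact Prod.ext (Fin.ext h1) h2

theorem exists_ordE_eq {t : ℕ} (ht : t < 2 * n) : ∃ e : Fin n × Bool, ordE e = t := by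
  refine ⟨(⟨t / 2, by omega⟩, decide (t % 2 = 0)), ?_⟩
  simp only [ordE, decide_eq_true_eq]
  split_ifs <;> omega

variable {R : Type*} [CommRing R]

/-- The weights `X`, `Y` of the primed alphabet, indexed by the positions `ordE` of its letters. -/
noncomputable def letterWeight (X Y : Fin n → ℤ → R) : ℕ → ℤ → R :=
  Function.extend ordE (fun e => if e.2 then Y e.1 else X e.1) 0

theorem letterWeight_ordE (X Y : Fin n → ℤ → R) (e : Fin n × Bool) (c : ℤ) :
    letterWeight X Y (ordE e) c = if e.2 then Y e.1 c else X e.1 c := by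
  rw [letterWeight, ordE_injective.extend_apply]
  split_ifs <;> rfl

theorem QGen_eq_tabSum (C : Finset (ℕ × ℕ)) (X Y : Fin n → ℤ → R) :
    QGen n C X Y = tabSum Even (letterWeight X Y) (2 * n) C := by
  refine Finset.sum_bij (fun T _ c => ordE (T c)) (fun T hT => ?_) (fun T _ T' _ h => ?_)
    (fun f hf => ?_) fun T _ => ?_
  · refine mem_tableaux.2 ⟨fun c => ordE_lt _, ?_⟩
    simpa [IsTableau, IsMonotoneAlong, IsRightNeighbor, IsLowerNeighbor, even_ordE,
      ordE_injective.eq_iff] using hT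
  · exact funext fun c => ordE_injective (congrFun h c)
  · obtain ⟨hlt, htab⟩ := mem_tableaux.1 hf
    choose T hT using fun c => exists_ordE_eq (hlt c)
    obtain rfl : (fun c => ordE (T c)) = f := funext hT
    refine ⟨T, ?_, rfl⟩
    simpa [IsTableau, IsMonotoneAlong, IsRightNeighbor, IsLowerNeighbor, even_ordE,
      ordE_injective.eq_iff] using htab
  · simp only [letterWeight_ordE]

theorem shiftedCells_eq_cells {k p : ℕ} {lam : ℕ → ℕ} {s : Fin k → ℕ} (hpk : p ≤ k)
    (hzero : ∀ i, p ≤ i → lam i = 0) (hs : Antitone s) (hlam : ∀ i, s i - 1 = lam i) :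
    shiftedCells lam (fun _ => 0) p = cells s := by
  ext q
  simp only [shiftedCells, mem_cells, Finset.mem_filter, Finset.mem_product, Finset.mem_range]
  constructor
  · rintro ⟨⟨hp, -⟩, hleft, hright⟩
    have hlam := hlam ⟨q.1, hp.trans_le hpk⟩
    refine ⟨⟨q.1, hp.trans_le hpk⟩, q.2 - q.1, ?_, Prod.ext rfl ?_⟩ <;> simp only at * <;> omega
  · rintro ⟨i, c, hc, rfl⟩
    have hi := hlam i
    have hp : (i : ℕ) < p := by
      by_contra! h
      have := hzero i h
      omega
    have hle : s i ≤ s ⟨0, by omega⟩ := hs (Nat.zero_le _)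
    have h0 := hlam ⟨0, by omega⟩
    refine ⟨⟨hp, ?_⟩, ?_, ?_⟩ <;> simp only at * <;> omega

theorem qTwoRow_eq_tabSum {a b : ℕ} (hba : b ≤ a) (X Y : Fin n → ℤ → R) :
    qTwoRow n (a - 1) (b - 1) X Y = tabSum Even (letterWeight X Y) (2 * n) (cells ![a, b]) := by
  rw [qTwoRow, QGen_eq_tabSum, shiftedCells_eq_cells le_rfl]
  · intro i hi
    rw [if_neg (by omega), if_neg (by omega)]
  · exact antitone_iff_forall_lt.2 <| by simpa [Fin.forall_fin_two] using hba
  · exact Fin.forall_fin_two.2 ⟨rfl, rfl⟩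

end PrimedAlphabet

/-- **Row-based (Schur-type) Pfaffian identity for the ninth variation
Q-function.**  For a strict partition `λ` of length `p`,
`Q_λ(X,Y) = Pf( Q_{(λ_i,λ_j)}(X,Y) )_{1 ≤ i,j ≤ l}` where `l = p` if `p` is
even and `l = p + 1` otherwise (with `λ_{p+1} = 0`), the matrix being the
antisymmetrization with entries `Q_{(λ_i,λ_j)}(X,Y)` for `i < j`. -/
theorem QGen_row_pfaffian {R : Type*} [CommRing R] (n p : ℕ) (lam : ℕ → ℕ)
    (hlam : ∀ i j, i < j → j < p → lam j < lam i) (hlampos : ∀ i, i < p → 0 < lam i)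
    (hlamlen : ∀ i, p ≤ i → lam i = 0) (X Y : Fin n → ℤ → R) :
    QGen n (shiftedCells lam (fun _ => 0) p) X Y =
      pfaffian (m := (p + 1) / 2) (Matrix.of fun i j =>
        if (i : ℕ) < (j : ℕ) then qTwoRow n (lam (i : ℕ)) (lam (j : ℕ)) X Y
        else if (i : ℕ) = (j : ℕ) then 0
        else - qTwoRow n (lam (j : ℕ)) (lam (i : ℕ)) X Y) := by
  let s : Fin (2 * ((p + 1) / 2)) → ℕ := fun i => if (i : ℕ) < p then lam i + 1 else 0
  have hs : StrictAnti s := fun i j hij => by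
    have hi : (i : ℕ) < p := by omega
    simp only [s, if_pos hi]
    split_ifs with hj
    · exact Nat.succ_lt_succ (hlam i j hij hj)
    · exact Nat.succ_pos _
  have hslam (i : Fin (2 * ((p + 1) / 2))) : s i - 1 = lam i := by
    by_cases hi : (i : ℕ) < p
    · simp [s, hi]
    · simp [s, hi, hlamlen i (not_lt.1 hi)]
  rw [QGen_eq_tabSum, shiftedCells_eq_cells (by omega) hlamlen hs.antitone hslam,
    tabSum_cells_eq_rowPfaffian _ _ _ hs]
  refine rowPfaffian_eq_pfaffian _ _ _ fun i j hij => ?_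
  rw [twoRowForm_single _ _ _ (hs hij), Matrix.of_apply, if_pos (Fin.lt_def.1 hij), ← hslam i,
    ← hslam j, qTwoRow_eq_tabSum (hs hij).le]
end
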